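/- arXiv:1812.10279 — 3 statements merged into one kernel-verified Lean document; each statement's English description precedes it below -/
import Mathlib

section
/- Let γ ≥ 1, s > 0, μ, k > 0, and let 0 < P⁺ < P⁻ be the two positive roots of f(P) = P^γ − C₁ + C₂/P, where C₁ = ((P⁺)^{γ+1} − (P⁻)^{γ+1})/(P⁺ − P⁻) and C₂ = P⁺P⁻·((P⁺)^γ − (P⁻)^γ)/(P⁺ − P⁻). Suppose F₁(P) ≤ 0 for all 0 < P < P⁺, where F₁(P) = F(P) − (sμP/k)² − F(P⁻) and F(P) = P^{γ+1}/(γ+1) − C₁P + C₂·ln P, and suppose in addition that sμ/k < √(−2f'(P⁺)). Then there exists a heteroclinic solution (P, Q̃) : ℝ → (0,∞) × ℝ of the system P' = (2/k²)Q̃, Q̃' = f(P) − (2μs/k²)Q̃ + (2/k²)Q̃²/P with (P, Q̃)(y) → (P⁻, 0) as y → −∞, (P, Q̃)(y) → (P⁺, 0) as y → +∞, and the profile P is non-monotone: P is neither monotone nondecreasing nor monotone nonincreasing on ℝ. -/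
open Filter Topology

section ODEgen
open Set Metric
open scoped NNReal

variable {E : Type*} [NormedAddCommGroup E] [NormedSpace ℝ E]

/-- `α` solves `α' = X α` on the symmetric interval of radius `r`. -/
def SolOn (X : E → E) (r : ℝ) (α : ℝ → E) : Prop :=
  ∀ t ∈ Ioo (-r) r, HasDerivAt α (X (α t)) t

/-- `α` solves `α' = X α` on the real line. -/
def Sol (X : E → E) (α : ℝ → E) : Prop := ∀ t, HasDerivAt α (X (α t)) t

lemma sol_local [CompleteSpace E] {X : E → E} {K : ℝ≥0} (hX : LipschitzWith K X) (x₀ : E) :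
    ∃ α : ℝ → E, α 0 = x₀ ∧ SolOn X (1 / (2 * (K + 1))) α := by
  set ε : ℝ := 1 / (2 * (K + 1)) with hε
  have hK : (0:ℝ) ≤ K := K.2
  have hε0 : 0 < ε := by positivity
  have hKε : K * ε ≤ 1 / 2 := by
    rw [hε, mul_one_div, div_le_div_iff₀ (by positivity) (by positivity)]; linarith
  let A : ℝ≥0 := ⟨2 * ε * ‖X x₀‖, by positivity⟩
  let L : ℝ≥0 := ⟨‖X x₀‖ + K * (2 * ε * ‖X x₀‖), by positivity⟩
  have h0 : (0:ℝ) ∈ Icc (-ε) ε := ⟨by linarith, hε0.le⟩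
  have hPL : IsPicardLindelof (fun _ => X) (⟨0, h0⟩ : Icc (-ε) ε) x₀ A 0 L K := by
    refine ⟨fun _ _ => hX.lipschitzOnWith, fun _ _ => continuousOn_const, ?_, ?_⟩
    · intro t _ x hx
      have h1 : ‖X x‖ ≤ ‖X x₀‖ + ‖X x - X x₀‖ := by
        have := norm_add_le (X x₀) (X x - X x₀); simpa using this
      have h2 : ‖X x - X x₀‖ ≤ K * ‖x - x₀‖ := by
        simpa [dist_eq_norm] using hX.dist_le_mul x x₀
      have h3 : ‖x - x₀‖ ≤ 2 * ε * ‖X x₀‖ := by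
        have := mem_closedBall.1 hx
        rwa [dist_eq_norm] at this
      have : (K:ℝ) * ‖x - x₀‖ ≤ K * (2 * ε * ‖X x₀‖) := by gcongr
      change ‖X x‖ ≤ ‖X x₀‖ + K * (2 * ε * ‖X x₀‖)
      linarith
    · have : max (ε - 0) (0 - -ε) = ε := by simp
      change (‖X x₀‖ + K * (2 * ε * ‖X x₀‖)) * max (ε - 0) (0 - -ε) ≤ 2 * ε * ‖X x₀‖ - 0
      rw [this]
      have h5 := norm_nonneg (X x₀)
      nlinarith [mul_le_mul_of_nonneg_right hKε (mul_nonneg hε0.le h5)]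
  obtain ⟨α, h1, h2⟩ := hPL.exists_eq_forall_mem_Icc_hasDerivWithinAt₀
  exact ⟨α, h1, fun t ht => (h2 t (Ioo_subset_Icc_self ht)).hasDerivAt (Icc_mem_nhds ht.1 ht.2)⟩

lemma sol_uniq_Ioo {X : E → E} {K : ℝ≥0} (hX : LipschitzWith K X) {a b t₀ : ℝ} {α β : ℝ → E}
    (ht : t₀ ∈ Ioo a b)
    (hα : ∀ t ∈ Ioo a b, HasDerivAt α (X (α t)) t)
    (hβ : ∀ t ∈ Ioo a b, HasDerivAt β (X (β t)) t) (h : α t₀ = β t₀) : EqOn α β (Ioo a b) :=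
  ODE_solution_unique_of_mem_Ioo (v := fun _ => X) (s := fun _ => univ) (K := K)
    (fun _ _ => hX.lipschitzOnWith) ht (fun t ht => ⟨hα t ht, trivial⟩)
    (fun t ht => ⟨hβ t ht, trivial⟩) h

lemma hasDerivAt_shift {X : E → E} {α : ℝ → E} {t s : ℝ} 
    (h : HasDerivAt α (X (α (t + s))) (t + s)) :
    HasDerivAt (fun u => α (u + s)) (X ((fun u => α (u + s)) t)) t := by
  simpa using h.comp_add_const t s

lemma sol_double {X : E → E} {K : ℝ≥0} (hX : LipschitzWith K X) {r : ℝ} (hr : 0 < r)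
    (H : ∀ x₀, ∃ α : ℝ → E, α 0 = x₀ ∧ SolOn X r α) :
    ∀ x₀, ∃ α : ℝ → E, α 0 = x₀ ∧ SolOn X (3 / 2 * r) α := by
  intro x₀
  obtain ⟨α, hα0, hα⟩ := H x₀
  obtain ⟨β, hβ0, hβ⟩ := H (α (r / 2))
  obtain ⟨δ, hδ0, hδ⟩ := H (α (-(r / 2)))
  let b : ℝ → E := fun t => β (t + -(r / 2))
  let d : ℝ → E := fun t => δ (t + r / 2)
  have hb : ∀ t ∈ Ioo (-(r/2)) (3 / 2 * r), HasDerivAt b (X (b t)) t := fun t ht =>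
    hasDerivAt_shift (hβ _ ⟨by linarith [ht.1], by linarith [ht.2]⟩)
  have hd : ∀ t ∈ Ioo (-(3 / 2 * r)) (r / 2), HasDerivAt d (X (d t)) t := fun t ht =>
    hasDerivAt_shift (hδ _ ⟨by linarith [ht.1], by linarith [ht.2]⟩)
  have eb : EqOn b α (Ioo (-(r/2)) r) := by
    refine sol_uniq_Ioo hX (t₀ := r / 2) ⟨by linarith, by linarith⟩
      (fun t ht => hb t ⟨ht.1, by linarith [ht.2]⟩)
      (fun t ht => hα t ⟨by linarith [ht.1], ht.2⟩) (by simp [b, hβ0])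
  have ed : EqOn d α (Ioo (-r) (r/2)) := by
    refine sol_uniq_Ioo hX (t₀ := -(r / 2)) ⟨by linarith, by linarith⟩
      (fun t ht => hd t ⟨by linarith [ht.1], ht.2⟩)
      (fun t ht => hα t ⟨ht.1, by linarith [ht.2]⟩) (by simp [d, hδ0])
  let η : ℝ → E := fun t => if 0 ≤ t then b t else d t
  have e0 : EqOn η α (Ioo (-(r/2)) (r/2)) := by
    intro t ht
    by_cases h : 0 ≤ t
    · simp only [η, h, if_true]; exact eb ⟨ht.1, by linarith [ht.2]⟩
    · simp only [η, h, if_false]; exact ed ⟨by linarith [ht.1], ht.2⟩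
  refine ⟨η, (e0 ⟨by linarith, by linarith⟩).trans hα0, fun t ht => ?_⟩
  rcases lt_trichotomy t 0 with h | h | h
  · have he : η =ᶠ[𝓝 t] d := by
      filter_upwards [Iio_mem_nhds h] with u hu
      simp [η, not_le.2 (show u < 0 from hu)]
    rw [he.eq_of_nhds]
    exact (hd t ⟨ht.1, by linarith⟩).congr_of_eventuallyEq he
  · have he : η =ᶠ[𝓝 t] α := by
      filter_upwards [Ioo_mem_nhds (show -(r/2) < t by linarith) (show t < r/2 by linarith)] with u hu
      exact e0 hu
    rw [he.eq_of_nhds]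
    exact (hα t ⟨by linarith, by linarith⟩).congr_of_eventuallyEq he
  · have he : η =ᶠ[𝓝 t] b := by
      filter_upwards [Ioi_mem_nhds h] with u hu
      simp [η, le_of_lt (show 0 < u from hu)]
    rw [he.eq_of_nhds]
    exact (hb t ⟨by linarith, ht.2⟩).congr_of_eventuallyEq he

lemma sol_global [CompleteSpace E] {X : E → E} {K : ℝ≥0} (hX : LipschitzWith K X) (x₀ : E) :
    ∃ α : ℝ → E, α 0 = x₀ ∧ Sol X α := by
  have hK : (0:ℝ) ≤ K := K.2
  set ε : ℝ := 1 / (2 * (K + 1)) with hε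
  have hε0 : 0 < ε := by positivity
  have H : ∀ n : ℕ, ∀ x₀, ∃ α : ℝ → E, α 0 = x₀ ∧ SolOn X ((3 / 2) ^ n * ε) α := by
    intro n
    induction n with
    | zero => intro x; rw [pow_zero, one_mul]; exact sol_local hX x
    | succ n ih =>
      intro x
      have := sol_double hX (by positivity) ih x
      rwa [pow_succ', mul_assoc]
  have H2 : ∀ n : ℕ, ∃ α : ℝ → E, α 0 = x₀ ∧ SolOn X (n + 1) α := by
    intro n
    obtain ⟨m, hm⟩ := pow_unbounded_of_one_lt ((n + 1) / ε) (show (1:ℝ) < 3 / 2 by norm_num)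
    rw [div_lt_iff₀ hε0] at hm
    obtain ⟨α, h0, h⟩ := H m x₀
    exact ⟨α, h0, fun t ht => h t ⟨by linarith [ht.1], by linarith [ht.2]⟩⟩
  choose α h0 h using H2
  have comp : ∀ n m : ℕ, n ≤ m → EqOn (α n) (α m) (Ioo (-((n:ℝ)+1)) (n+1)) := by
    intro n m hnm
    have hc : (n:ℝ) ≤ m := by exact_mod_cast hnm
    have hn : (0:ℝ) ≤ n := by positivity
    refine sol_uniq_Ioo hX (t₀ := 0) ⟨by linarith, by linarith⟩ (h n)
      (fun t ht => h m t ⟨by linarith [ht.1], by linarith [ht.2]⟩) (by rw [h0, h0])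
  refine ⟨fun t => α ⌈|t|⌉₊ t, by simp [h0], fun t => ?_⟩
  have key : ∀ u, |u| < (⌈|t|⌉₊ : ℝ) + 1 → α ⌈|u|⌉₊ u = α (⌈|t|⌉₊ + 1) u := by
    intro u hu
    refine comp _ _ ?_ ?_
    · rw [Nat.ceil_le]; push_cast; exact hu.le
    · have := Nat.le_ceil (|u|)
      constructor <;> linarith [neg_abs_le u, le_abs_self u]
  have ht : |t| < (⌈|t|⌉₊ : ℝ) + 1 := by linarith [Nat.le_ceil (|t|)]
  have he : (fun t => α ⌈|t|⌉₊ t) =ᶠ[𝓝 t] α (⌈|t|⌉₊ + 1) := by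
    filter_upwards [(isOpen_lt continuous_abs continuous_const).mem_nhds ht] with u hu
    exact key u hu
  have hd : HasDerivAt (α (⌈|t|⌉₊ + 1)) (X (α (⌈|t|⌉₊ + 1) t)) t := by
    apply h; push_cast
    constructor <;> linarith [neg_abs_le t, le_abs_self t]
  have := hd.congr_of_eventuallyEq he
  rwa [← key t ht] at this

lemma sol_dist_fwd {X : E → E} {K : ℝ≥0} (hX : LipschitzWith K X) {α β : ℝ → E}
    (hα : Sol X α) (hβ : Sol X β) {t : ℝ} (ht : 0 ≤ t) :
    dist (α t) (β t) ≤ dist (α 0) (β 0) * Real.exp (K * t) := by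
  have := dist_le_of_trajectories_ODE (v := fun _ => X) (K := K) (f := α) (g := β) (a := 0) (b := t)
    (fun _ => hX) (fun u _ => (hα u).continuousAt.continuousWithinAt)
    (fun u _ => (hα u).hasDerivWithinAt) (fun u _ => (hβ u).continuousAt.continuousWithinAt)
    (fun u _ => (hβ u).hasDerivWithinAt) le_rfl t ⟨ht, le_rfl⟩
  simpa using this

lemma sol_dist {X : E → E} {K : ℝ≥0} (hX : LipschitzWith K X) {α β : ℝ → E}
    (hα : Sol X α) (hβ : Sol X β) (t : ℝ) :
    dist (α t) (β t) ≤ dist (α 0) (β 0) * Real.exp (K * |t|) := by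
  rcases le_total 0 t with h | h
  · rw [abs_of_nonneg h]; exact sol_dist_fwd hX hα hβ h
  · have hX' : LipschitzWith K (fun x => - X x) := hX.neg
    have hr : ∀ α : ℝ → E, Sol X α → Sol (fun x => - X x) (fun t => α (-t)) := by
      intro α hα t
      have := (hα (-t)).scomp t (hasDerivAt_neg t)
      rw [neg_one_smul] at this
      exact this
    have := sol_dist_fwd hX' (hr α hα) (hr β hβ) (t := -t) (by linarith)
    rw [abs_of_nonpos h]
    simpa using this

lemma sol_shift {X : E → E} {α : ℝ → E} (hα : Sol X α) (s : ℝ) : Sol X (fun t => α (t + s)) :=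
  fun t => hasDerivAt_shift (hα (t + s))

end ODEgen

section Wave
open Set Metric
open scoped NNReal

/-- The vector field of `w'' = g w - c w'`. -/
def fld (g : ℝ → ℝ) (c : ℝ) : ℝ × ℝ → ℝ × ℝ := fun p => (p.2, g p.1 - c * p.2)

lemma fld_lipschitz {g : ℝ → ℝ} {Kg : ℝ≥0} (hg : LipschitzWith Kg g) (c : ℝ) :
    ∃ K : ℝ≥0, LipschitzWith K (fld g c) := by
  have h1 : LipschitzWith (Kg * 1) (fun p : ℝ × ℝ => g p.1) := hg.comp LipschitzWith.prod_fst
  have h2 : LipschitzWith (‖c‖₊ * 1) (fun p : ℝ × ℝ => c * p.2) :=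
    (lipschitzWith_smul c).comp LipschitzWith.prod_snd
  exact ⟨_, LipschitzWith.prod_snd.prodMk (h1.sub h2)⟩

lemma sol_fst {g : ℝ → ℝ} {c : ℝ} {x : ℝ → ℝ × ℝ} (h : Sol (fld g c) x) (t : ℝ) :
    HasDerivAt (fun t => (x t).1) (x t).2 t :=
  (ContinuousLinearMap.fst ℝ ℝ ℝ).hasFDerivAt.comp_hasDerivAt t (h t)

lemma sol_snd {g : ℝ → ℝ} {c : ℝ} {x : ℝ → ℝ × ℝ} (h : Sol (fld g c) x) (t : ℝ) :
    HasDerivAt (fun t => (x t).2) (g (x t).1 - c * (x t).2) t :=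
  (ContinuousLinearMap.snd ℝ ℝ ℝ).hasFDerivAt.comp_hasDerivAt t (h t)

lemma sol_cont {g : ℝ → ℝ} {c : ℝ} {x : ℝ → ℝ × ℝ} (h : Sol (fld g c) x) : Continuous x :=
  continuous_iff_continuousAt.2 fun t => (h t).continuousAt

lemma mono_aux {F F' : ℝ → ℝ} (hF : ∀ t, HasDerivAt F (F' t) t) {a b : ℝ} (hab : a ≤ b)
    (h : ∀ t ∈ Icc a b, 0 ≤ F' t) : F a ≤ F b := by
  refine monotoneOn_of_hasDerivWithinAt_nonneg (convex_Icc a b) 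
    (fun t _ => (hF t).continuousAt.continuousWithinAt)
    (fun t _ => (hF t).hasDerivWithinAt) (fun t ht => h t (interior_subset ht))
    (left_mem_Icc.2 hab) (right_mem_Icc.2 hab) hab

/-- integrating factor: if `F' ≥ -l F` then `F a * exp (l (a - b)) ≤ F b`. -/
lemma intfac {F F' : ℝ → ℝ} (l : ℝ) (hF : ∀ t, HasDerivAt F (F' t) t) {a b : ℝ} (hab : a ≤ b)
    (h : ∀ t ∈ Icc a b, 0 ≤ F' t + l * F t) : F a * Real.exp (l * (a - b)) ≤ F b := by
  have h1 : ∀ t, HasDerivAt (fun t => F t * Real.exp (l * (t - b)))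
      ((F' t + l * F t) * Real.exp (l * (t - b))) t := by
    intro t
    have h2 : HasDerivAt (fun t => Real.exp (l * (t - b))) (Real.exp (l * (t - b)) * (l * 1)) t :=
      (((hasDerivAt_id t).sub_const b).const_mul l).exp
    exact ((hF t).mul h2).congr_deriv (by ring)
  have := mono_aux h1 hab (fun t ht => mul_nonneg (h t ht) (Real.exp_pos _).le)
  simpa using this

lemma wedge {g : ℝ → ℝ} {c m M δ α β ε T : ℝ} {x : ℝ → ℝ × ℝ} (hx : Sol (fld g c) x)
    (hε : 0 < ε) (hα : α * (α + c) ≤ m) (hβ : M ≤ β * (β + c)) (hαβ : α ≤ β)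
    (hm : ∀ w ≤ δ, m * w ≤ g w) (hM : ∀ w, 0 ≤ w → w ≤ δ → g w ≤ M * w)
    (hmneg : ∀ w ≤ 0, g w = 0) (hαp : 0 < α) (hc : 0 < c)
    (h0 : x 0 = (ε, α * ε)) (hT : ∀ t ∈ Icc 0 T, (x t).1 ≤ δ) :
    ∀ t ∈ Icc 0 T, α * (x t).1 ≤ (x t).2 ∧ ε * Real.exp (α * t) ≤ (x t).1 ∧
      (x t).2 ≤ β * (x t).1 := by
  have hA : ∀ t ∈ Icc 0 T, α * (x t).1 ≤ (x t).2 := by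
    intro t ht
    have := intfac (F := fun t => (x t).2 - α * (x t).1) (c + α)
      (fun s => (sol_snd hx s).sub ((sol_fst hx s).const_mul α)) ht.1 (fun s hs => by
        have h1 := hT s ⟨hs.1, hs.2.trans ht.2⟩
        have h3 : α * (α + c) * (x s).1 ≤ g (x s).1 := by
          rcases le_total (x s).1 0 with h | h
          · rw [hmneg _ h]; exact mul_nonpos_of_nonneg_of_nonpos (by positivity) h
          · exact (mul_le_mul_of_nonneg_right hα h).trans (hm _ h1)
        show 0 ≤ g (x s).1 - c * (x s).2 - α * (x s).2 + (c + α) * ((x s).2 - α * (x s).1)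
        nlinarith)
    simp only [h0] at this
    simp at this
    linarith
  have hw : ∀ t ∈ Icc 0 T, ε * Real.exp (α * t) ≤ (x t).1 := by
    intro t ht
    have := intfac (F := fun t => (x t).1) (-α)
      (fun s => sol_fst hx s) ht.1 (fun s hs => by
        have := hA s ⟨hs.1, hs.2.trans ht.2⟩
        show 0 ≤ (x s).2 + -α * (x s).1
        linarith)
    simp only [h0] at this
    simpa using this
  intro t ht
  refine ⟨hA t ht, hw t ht, ?_⟩
  have := intfac (F := fun t => β * (x t).1 - (x t).2) (c + β)
      (fun s => ((sol_fst hx s).const_mul β).sub (sol_snd hx s)) ht.1 (fun s hs => by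
        have hs' : s ∈ Icc 0 T := ⟨hs.1, hs.2.trans ht.2⟩
        have h1 := hT s hs'
        have h2 : 0 ≤ (x s).1 := le_trans (by positivity) (hw s hs')
        have h3 : g (x s).1 ≤ β * (β + c) * (x s).1 :=
          (hM _ h2 h1).trans (mul_le_mul_of_nonneg_right hβ h2)
        show 0 ≤ β * (x s).2 - (g (x s).1 - c * (x s).2) + (c + β) * (β * (x s).1 - (x s).2)
        nlinarith)
  simp only [h0] at this
  have h5 : 0 ≤ (β * ε - α * ε) * Real.exp ((c + β) * (0 - t)) := by
    apply mul_nonneg _ (Real.exp_pos _).le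
    nlinarith
  linarith

lemma wedge_hit {g : ℝ → ℝ} {c m M δ α β ε : ℝ} {x : ℝ → ℝ × ℝ} (hx : Sol (fld g c) x)
    (hε : 0 < ε) (hεδ : ε ≤ δ) (hα : α * (α + c) ≤ m) (hβ : M ≤ β * (β + c)) (hαβ : α ≤ β)
    (hm : ∀ w ≤ δ, m * w ≤ g w) (hM : ∀ w, 0 ≤ w → w ≤ δ → g w ≤ M * w)
    (hmneg : ∀ w ≤ 0, g w = 0) (hαp : 0 < α) (hc : 0 < c)
    (h0 : x 0 = (ε, α * ε)) :
    ∃ T, 0 ≤ T ∧ (x T).1 = δ ∧ (∀ t ∈ Icc 0 T, (x t).1 ≤ δ) ∧ δ ≤ ε * Real.exp (β * T) := by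
  have hcont : Continuous (fun t => (x t).1) := continuous_fst.comp (sol_cont hx)
  have hex : ∃ t, 0 ≤ t ∧ δ ≤ (x t).1 := by
    by_contra! hcon
    have h1 : ∀ T, 0 ≤ T → ε * Real.exp (α * T) < δ := fun T hT =>
      ((wedge hx hε hα hβ hαβ hm hM hmneg hαp hc h0 (T := T) (fun t ht => (hcon t ht.1).le)) T
        ⟨hT, le_rfl⟩).2.1.trans_lt (hcon T hT)
    have h2 := h1 (δ / (ε * α)) (by have := hε.le.trans hεδ; positivity)
    have h3 : α * (δ / (ε * α)) = δ / ε := by field_simp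
    rw [h3] at h2
    have h4 := Real.add_one_le_exp (δ / ε)
    have h5 : ε * (δ / ε + 1) ≤ ε * Real.exp (δ / ε) := by gcongr
    have h6 : ε * (δ / ε + 1) = δ + ε := by field_simp
    linarith
  let S := {t : ℝ | 0 ≤ t ∧ δ ≤ (x t).1}
  have hScl : IsClosed S := (isClosed_le continuous_const continuous_id).inter
    (isClosed_le continuous_const hcont)
  have hSb : BddBelow S := ⟨0, fun t ht => ht.1⟩
  have hTS : sInf S ∈ S := hScl.csInf_mem hex hSb
  set T := sInf S with hTdef
  have hlt : ∀ t, 0 ≤ t → t < T → (x t).1 < δ := by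
    intro t h0 hT
    by_contra! h
    exact absurd (csInf_le hSb (show t ∈ S from ⟨h0, h⟩)) (not_le.2 hT)
  have hTe : (x T).1 = δ := by
    have : δ ∈ Icc (x 0).1 (x T).1 := ⟨by simp [h0, hεδ], hTS.2⟩
    obtain ⟨t, ht, hte⟩ := intermediate_value_Icc hTS.1 hcont.continuousOn this
    have : t = T := by
      refine le_antisymm ht.2 ?_
      by_contra! h
      exact absurd (hlt t ht.1 h) (by simp only at hte; linarith)
    rw [← this]; exact hte
  have hle : ∀ t ∈ Icc 0 T, (x t).1 ≤ δ := by
    intro t ht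
    rcases ht.2.lt_or_eq with h | h
    · exact (hlt t ht.1 h).le
    · rw [h, hTe]
  refine ⟨T, hTS.1, hTe, hle, ?_⟩
  have hW := wedge hx hε hα hβ hαβ hm hM hmneg hαp hc h0 hle
  have := intfac (F := fun t => - (x t).1) (-β) (fun s => (sol_fst hx s).neg) hTS.1
    (fun s hs => by
      have := (hW s hs).2.2
      show 0 ≤ -(x s).2 + -β * -(x s).1
      linarith)
  simp only [h0, hTe] at this
  simp at this
  linarith

lemma unstable {g : ℝ → ℝ} {c m M δ : ℝ} {Kg : ℝ≥0} (hg : LipschitzWith Kg g)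
    (hδ : 0 < δ) (hm0 : 0 < m) (hmM : m ≤ M) (hc : 0 < c)
    (hm : ∀ w ≤ δ, m * w ≤ g w) (hM : ∀ w, 0 ≤ w → w ≤ δ → g w ≤ M * w)
    (hmneg : ∀ w ≤ 0, g w = 0) :
    ∃ x : ℝ → ℝ × ℝ, Sol (fld g c) x ∧ (∀ t ≤ 0, 0 < (x t).2) ∧ Tendsto x atBot (𝓝 (0, 0)) := by
  obtain ⟨K, hK⟩ := fld_lipschitz hg c
  set α := min 1 (m / (1 + c)) with hαd
  set β := M / c with hβd
  have hM0 : 0 < M := hm0.trans_le hmM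
  have hαp : 0 < α := lt_min one_pos (by positivity)
  have hβp : 0 < β := by positivity
  have hα : α * (α + c) ≤ m := by
    have h1 : α ≤ 1 := min_le_left _ _
    have h2 : α ≤ m / (1 + c) := min_le_right _ _
    rw [le_div_iff₀ (by positivity)] at h2
    nlinarith
  have hβ : M ≤ β * (β + c) := by
    have : β * c = M := by rw [hβd]; field_simp
    nlinarith [sq_nonneg β]
  have hαβ : α ≤ β := by
    refine (min_le_right _ _).trans ?_
    rw [hβd]; gcongr; linarith
  have step : ∀ n : ℕ, ∃ y : ℝ → ℝ × ℝ, Sol (fld g c) y ∧ (y 0).1 = δ ∧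
      ∀ t ∈ Icc (-(n:ℝ)) 0, 0 ≤ (y t).1 ∧ (y t).1 ≤ δ ∧ α * (y t).1 ≤ (y t).2 ∧
        (y t).2 ≤ β * (y t).1 := by
    intro n
    set ε := δ * Real.exp (-(β * n)) with hεd
    have hε : 0 < ε := by positivity
    have hεδ : ε ≤ δ := by
      rw [hεd]
      have : Real.exp (-(β * n)) ≤ 1 := Real.exp_le_one_iff.2 (by simp; positivity)
      nlinarith
    obtain ⟨x, h0, hx⟩ := sol_global hK (ε, α * ε)
    obtain ⟨T, hT0, hTe, hT, hTn⟩ := wedge_hit hx hε hεδ hα hβ hαβ hm hM hmneg hαp hc h0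
    have hnT : (n:ℝ) ≤ T := by
      rw [hεd, mul_assoc, ← Real.exp_add] at hTn
      have h1 : (1:ℝ) ≤ Real.exp (-(β * n) + β * T) := by
        by_contra! h
        nlinarith
      rw [Real.one_le_exp_iff] at h1
      nlinarith
    refine ⟨fun t => x (t + T), sol_shift hx T, by simpa using hTe, fun t ht => ?_⟩
    have ht' : t + T ∈ Icc 0 T := ⟨by linarith [ht.1], by linarith [ht.2]⟩
    have hW := wedge hx hε hα hβ hαβ hm hM hmneg hαp hc h0 hT _ ht'
    exact ⟨le_trans (by positivity) hW.2.1, hT _ ht', hW.1, hW.2.2⟩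
  choose y hy hy0 hyt using step
  have hp : ∀ n, (y n 0).2 ∈ Icc (α * δ) (β * δ) := by
    intro n
    have := hyt n 0 ⟨by simp, le_rfl⟩
    rw [hy0] at this
    exact ⟨this.2.2.1, this.2.2.2⟩
  obtain ⟨p, hpm, φ, hφ, hlim⟩ := isCompact_Icc.tendsto_subseq hp
  obtain ⟨x, h0, hx⟩ := sol_global hK (δ, p)
  have hl0 : Tendsto (fun n => y (φ n) 0) atTop (𝓝 (x 0)) := by
    rw [h0]
    have : (fun n => y (φ n) 0) = fun n => (δ, (y (φ n) 0).2) := by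
      funext n; exact Prod.ext (hy0 _) rfl
    rw [this]
    exact tendsto_const_nhds.prodMk_nhds hlim
  have hl : ∀ t, Tendsto (fun n => y (φ n) t) atTop (𝓝 (x t)) := by
    intro t
    rw [tendsto_iff_dist_tendsto_zero] at hl0 ⊢
    refine squeeze_zero (fun _ => dist_nonneg) (fun n => sol_dist hK (hy (φ n)) hx t) ?_
    simpa using hl0.mul_const (Real.exp (K * |t|))
  have hcone : ∀ t ≤ 0, 0 ≤ (x t).1 ∧ (x t).1 ≤ δ ∧ α * (x t).1 ≤ (x t).2 ∧
        (x t).2 ≤ β * (x t).1 := by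
    intro t ht
    have hC : IsClosed {q : ℝ × ℝ | 0 ≤ q.1 ∧ q.1 ≤ δ ∧ α * q.1 ≤ q.2 ∧ q.2 ≤ β * q.1} := by
      have h1 : IsClosed {q : ℝ × ℝ | 0 ≤ q.1} := isClosed_le (by fun_prop) (by fun_prop)
      have h2 : IsClosed {q : ℝ × ℝ | q.1 ≤ δ} := isClosed_le (by fun_prop) (by fun_prop)
      have h3 : IsClosed {q : ℝ × ℝ | α * q.1 ≤ q.2} := isClosed_le (by fun_prop) (by fun_prop)
      have h4 : IsClosed {q : ℝ × ℝ | q.2 ≤ β * q.1} := isClosed_le (by fun_prop) (by fun_prop)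
      exact h1.inter (h2.inter (h3.inter h4))
    refine hC.mem_of_tendsto (hl t) ?_
    obtain ⟨N, hN⟩ := exists_nat_ge (-t)
    filter_upwards [hφ.tendsto_atTop.eventually_ge_atTop N] with n hn
    have : (N:ℝ) ≤ φ n := by exact_mod_cast hn
    exact hyt (φ n) t ⟨by linarith, ht⟩
  have hpos : ∀ t ≤ 0, 0 < (x t).1 := by
    intro t ht
    have := intfac (F := fun t => - (x t).1) (-β) (fun s => (sol_fst hx s).neg) ht
      (fun s hs => by
        have := (hcone s hs.2).2.2.2
        show 0 ≤ -(x s).2 + -β * -(x s).1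
        linarith)
    simp only [h0] at this
    have h3 := Real.exp_pos (-β * (t - 0))
    by_contra! h
    nlinarith
  have hdec : ∀ t ≤ 0, (x t).1 ≤ δ * Real.exp (α * t) := by
    intro t ht
    have := intfac (F := fun t => (x t).1) (-α) (fun s => (sol_fst hx s)) ht
      (fun s hs => by
        have := (hcone s hs.2).2.2.1
        show 0 ≤ (x s).2 + -α * (x s).1
        linarith)
    simp only [h0] at this
    have h3 : Real.exp (-α * (t - 0)) * Real.exp (α * t) = 1 := by
      rw [← Real.exp_add]; simp
    have h4 := mul_le_mul_of_nonneg_right this (Real.exp_pos (α * t)).le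
    rwa [mul_assoc, h3, mul_one] at h4
  have hexp : Tendsto (fun t => δ * Real.exp (α * t)) atBot (𝓝 0) := by
    have : Tendsto (fun t => Real.exp (α * t)) atBot (𝓝 0) :=
      Real.tendsto_exp_atBot.comp (tendsto_id.const_mul_atBot hαp)
    simpa using this.const_mul δ
  have hw : Tendsto (fun t => (x t).1) atBot (𝓝 0) := by
    refine tendsto_of_tendsto_of_tendsto_of_le_of_le' tendsto_const_nhds hexp ?_ ?_
    · filter_upwards [eventually_le_atBot 0] with t ht using (hpos t ht).le
    · filter_upwards [eventually_le_atBot 0] with t ht using hdec t ht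
  have hv : Tendsto (fun t => (x t).2) atBot (𝓝 0) := by
    refine tendsto_of_tendsto_of_tendsto_of_le_of_le' tendsto_const_nhds
      (show Tendsto (fun t => β * (x t).1) atBot (𝓝 0) by simpa using hw.const_mul β) ?_ ?_
    · filter_upwards [eventually_le_atBot 0] with t ht
      have := hpos t ht
      exact le_trans (by positivity) (hcone t ht).2.2.1
    · filter_upwards [eventually_le_atBot 0] with t ht using (hcone t ht).2.2.2
  refine ⟨x, hx, fun t ht => lt_of_lt_of_le (mul_pos hαp (hpos t ht)) (hcone t ht).2.2.1, ?_⟩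
  exact hw.prodMk_nhds hv

end Wave

section Wave2
open Set Metric
open scoped NNReal

lemma energy_deriv {g H : ℝ → ℝ} {c : ℝ} {x : ℝ → ℝ × ℝ} (hx : Sol (fld g c) x)
    (hH : ∀ w, HasDerivAt H (g w) w) (t : ℝ) :
    HasDerivAt (fun t => (x t).2 ^ 2 / 2 - H (x t).1) (-(c * (x t).2 ^ 2)) t := by
  have h1 := ((sol_snd hx t).pow 2).div_const 2
  have h2 : HasDerivAt (fun t => H (x t).1) (g (x t).1 * (x t).2) t :=
    (hH (x t).1).comp t (sol_fst hx t)
  refine (h1.sub h2).congr_deriv ?_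
  simp only [Nat.cast_ofNat]
  ring

lemma energy_anti {g H : ℝ → ℝ} {c : ℝ} (hc : 0 < c) {x : ℝ → ℝ × ℝ} (hx : Sol (fld g c) x)
    (hH : ∀ w, HasDerivAt H (g w) w) : Antitone (fun t => (x t).2 ^ 2 / 2 - H (x t).1) := by
  intro a b hab
  have := mono_aux (fun t => (energy_deriv hx hH t).neg) hab
    (fun t _ => by have := sq_nonneg (x t).2; nlinarith)
  simp only [Pi.neg_apply] at this
  simp only
  linarith

lemma energy_neg {g H : ℝ → ℝ} {c : ℝ} (hc : 0 < c) {x : ℝ → ℝ × ℝ} (hx : Sol (fld g c) x)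
    (hH : ∀ w, HasDerivAt H (g w) w) (hH0 : H 0 = 0) (hv : ∀ t ≤ 0, 0 < (x t).2)
    (hbot : Tendsto x atBot (𝓝 (0, 0))) (t : ℝ) : (x t).2 ^ 2 / 2 - H (x t).1 < 0 := by
  have hanti := energy_anti hc hx hH
  have hHc : Continuous H := continuous_iff_continuousAt.2 fun w => (hH w).continuousAt
  have hlim : Tendsto (fun t => (x t).2 ^ 2 / 2 - H (x t).1) atBot (𝓝 0) := by
    have hc2 : Continuous (fun q : ℝ × ℝ => q.2 ^ 2 / 2 - H q.1) := by fun_prop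
    have := (hc2.tendsto (0, 0)).comp hbot
    simpa [hH0, Function.comp_def] using this
  have hle : ∀ t, (x t).2 ^ 2 / 2 - H (x t).1 ≤ 0 := fun t => hanti.ge_of_tendsto hlim t
  refine lt_of_le_of_ne (hle t) fun heq => ?_
  have hz : ∀ s ≤ t, (x s).2 ^ 2 / 2 - H (x s).1 = 0 := fun s hs =>
    le_antisymm (hle s) (heq ▸ hanti hs)
  set s := min t 0 - 1 with hs
  have hst : s < t := by have := min_le_left t 0; linarith
  have hs0 : s ≤ 0 := by have := min_le_right t 0; linarith
  have he : (fun t => (x t).2 ^ 2 / 2 - H (x t).1) =ᶠ[𝓝 s] fun _ => 0 := by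
    filter_upwards [Iio_mem_nhds hst] with u hu using hz u (le_of_lt hu)
  have := ((hasDerivAt_const s (0:ℝ)).congr_of_eventuallyEq he).unique (energy_deriv hx hH s)
  have h2 := hv s hs0
  have : 0 < c * (x s).2 ^ 2 := by positivity
  linarith

lemma forward {g H : ℝ → ℝ} {c W wp : ℝ} {Kg : ℝ≥0} (hg : LipschitzWith Kg g) (hc : 0 < c)
    {x : ℝ → ℝ × ℝ} (hx : Sol (fld g c) x)
    (hH : ∀ w, HasDerivAt H (g w) w) (hH0 : H 0 = 0) (hv : ∀ t ≤ 0, 0 < (x t).2)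
    (hbot : Tendsto x atBot (𝓝 (0, 0)))
    (hHn : ∀ w ≤ 0, H w ≤ 0) (hHW : ∀ w, W ≤ w → H w ≤ 0)
    (hzero : ∀ w, 0 < H w → g w = 0 → w = wp) :
    (∀ t, (x t).1 ∈ Ioo 0 W) ∧ Tendsto x atTop (𝓝 (wp, 0)) := by
  obtain ⟨K, hK⟩ := fld_lipschitz hg c
  have hHc : Continuous H := continuous_iff_continuousAt.2 fun w => (hH w).continuousAt
  have hneg := energy_neg hc hx hH hH0 hv hbot
  have hanti := energy_anti hc hx hH
  have hHp : ∀ t, 0 < H (x t).1 := fun t => by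
    have := hneg t; have := sq_nonneg (x t).2; linarith
  have hin : ∀ t, (x t).1 ∈ Ioo 0 W := by
    intro t
    constructor
    · by_contra! h
      exact absurd (hHp t) (not_lt.2 (hHn _ h))
    · by_contra! h
      exact absurd (hHp t) (not_lt.2 (hHW _ h))
  refine ⟨hin, ?_⟩
  obtain ⟨B, hB⟩ : ∃ B, ∀ w ∈ Icc 0 W, H w ≤ B := by
    obtain ⟨B, hB⟩ := (isCompact_Icc (a := 0) (b := W)).bddAbove_image hHc.continuousOn
    exact ⟨B, fun w hw => hB ⟨w, hw, rfl⟩⟩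
  have hHB : ∀ t, H (x t).1 ≤ B := fun t => hB _ (Ioo_subset_Icc_self (hin t))
  have hB0 : 0 < B := (hHp 0).trans_le (hHB 0)
  set en : ℝ × ℝ → ℝ := fun q => q.2 ^ 2 / 2 - H q.1 with hen
  have henc : Continuous en := by fun_prop
  have hbd : BddBelow (range fun t => (x t).2 ^ 2 / 2 - H (x t).1) := by
    refine ⟨-B, ?_⟩
    rintro _ ⟨t, rfl⟩
    have := hHB t; have := sq_nonneg (x t).2
    simp only; linarith
  have hEl := tendsto_atTop_ciInf hanti hbd
  set Ei := ⨅ t, ((x t).2 ^ 2 / 2 - H (x t).1) with hEi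
  have hEi0 : Ei < 0 := (ciInf_le hbd 0).trans_lt (hneg 0)
  have hcomp : IsCompact (Icc (0:ℝ) W ×ˢ Icc (-(2 * B + 1)) (2 * B + 1)) :=
    isCompact_Icc.prod isCompact_Icc
  have hmem : ∀ t, x t ∈ Icc (0:ℝ) W ×ˢ Icc (-(2 * B + 1)) (2 * B + 1) := by
    intro t
    refine ⟨Ioo_subset_Icc_self (hin t), ?_⟩
    have h1 : (x t).2 ^ 2 ≤ 2 * B := by have := hneg t; have := hHB t; linarith
    exact abs_le.1 (abs_le_of_sq_le_sq (by nlinarith) (by linarith))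
  refine tendsto_of_subseq_tendsto fun u hu => ?_
  obtain ⟨q, -, φ, hφ, hq⟩ := hcomp.tendsto_subseq (fun n => hmem (u n))
  refine ⟨φ, ?_⟩
  obtain ⟨y, hy0, hy⟩ := sol_global hK q
  have hu' : Tendsto (fun n => u (φ n)) atTop atTop := hu.comp hφ.tendsto_atTop
  have hl : ∀ s, Tendsto (fun n => x (s + u (φ n))) atTop (𝓝 (y s)) := by
    intro s
    have hq' : Tendsto (fun n => x (u (φ n))) atTop (𝓝 q) := hq
    rw [tendsto_iff_dist_tendsto_zero] at hq' ⊢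
    refine squeeze_zero (fun _ => dist_nonneg)
      (fun n => sol_dist hK (sol_shift hx (u (φ n))) hy s) ?_
    simpa [hy0] using hq'.mul_const (Real.exp (K * |s|))
  have hE : ∀ s, en (y s) = Ei := by
    intro s
    have h1 : Tendsto (fun n => en (x (s + u (φ n)))) atTop (𝓝 (en (y s))) :=
      (henc.tendsto _).comp (hl s)
    have h2 : Tendsto (fun n => en (x (s + u (φ n)))) atTop (𝓝 Ei) :=
      hEl.comp (tendsto_atTop_add_const_left _ s hu')
    exact tendsto_nhds_unique h1 h2
  have hv0 : ∀ s, (y s).2 = 0 := by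
    intro s
    have h1 := energy_deriv hy hH s
    have h2 : (fun t => (y t).2 ^ 2 / 2 - H (y t).1) = fun _ => Ei := funext hE
    rw [h2] at h1
    have h3 := h1.unique (hasDerivAt_const s Ei)
    have h4 : c * (y s).2 ^ 2 = 0 := by linarith
    simpa [hc.ne'] using h4
  have hg0 : g q.1 = 0 := by
    have h1 := sol_snd hy 0
    have h2 : (fun t => (y t).2) = fun _ => 0 := funext hv0
    rw [h2] at h1
    have h3 := h1.unique (hasDerivAt_const 0 (0:ℝ))
    rw [hv0 0, hy0] at h3
    linarith
  have hq2 : q.2 = 0 := by rw [← hy0]; exact hv0 0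
  have hq1 : q.1 = wp := by
    apply hzero _ _ hg0
    have := hE 0
    rw [hy0] at this
    simp only [hen, hq2] at this
    linarith
  have : q = (wp, 0) := Prod.ext hq1 hq2
  rw [← this]
  exact hq

lemma not_mono {g : ℝ → ℝ} {c wp b η : ℝ} {Kg : ℝ≥0} (hg : LipschitzWith Kg g)
    {x : ℝ → ℝ × ℝ} (hx : Sol (fld g c) x) (hwp : 0 < wp) (hgwp : g wp = 0) (hη : 0 < η)
    (hb : c ^ 2 / 4 < b) (hloc : ∀ z, 0 ≤ z → z ≤ η → b * z ≤ g (wp - z))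
    (hbot : Tendsto x atBot (𝓝 (0, 0))) (htop : Tendsto x atTop (𝓝 (wp, 0))) :
    ¬ Monotone (fun t => (x t).1) := by
  intro hmono
  obtain ⟨K, hK⟩ := fld_lipschitz hg c
  have htop1 : Tendsto (fun t => (x t).1) atTop (𝓝 wp) := (continuous_fst.tendsto _).comp htop
  have hbot1 : Tendsto (fun t => (x t).1) atBot (𝓝 0) := (continuous_fst.tendsto _).comp hbot
  have hle : ∀ t, (x t).1 ≤ wp := fun t => hmono.ge_of_tendsto htop1 t
  obtain ⟨T, hT⟩ := eventually_atTop.1 (htop1.eventually (Ioi_mem_nhds (show wp - η < wp by linarith)))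
  set ω := Real.sqrt (b - c ^ 2 / 4) with hω
  have hω0 : 0 < ω := Real.sqrt_pos.2 (by linarith)
  have hω2 : ω ^ 2 = b - c ^ 2 / 4 := Real.sq_sqrt (by linarith)
  have key : ∀ t₀, T ≤ t₀ → (x t₀).1 = wp := by
    intro t₀ ht₀
    refine le_antisymm (hle _) ?_
    let e : ℝ → ℝ := fun t => Real.exp (c / 2 * t)
    let S : ℝ → ℝ := fun t => Real.sin (ω * (t - t₀))
    let C : ℝ → ℝ := fun t => Real.cos (ω * (t - t₀))
    have he : ∀ t, HasDerivAt e (c / 2 * e t) t := fun t => by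
      have := ((hasDerivAt_id t).const_mul (c / 2)).exp
      exact this.congr_deriv (by simp [e]; ring)
    have hlin : ∀ t, HasDerivAt (fun t => ω * (t - t₀)) ω t := fun t => by
      simpa using ((hasDerivAt_id t).sub_const t₀).const_mul ω
    have hS : ∀ t, HasDerivAt S (ω * C t) t := fun t =>
      (hlin t).sin.congr_deriv (by simp [C]; ring)
    have hC : ∀ t, HasDerivAt C (-(ω * S t)) t := fun t =>
      (hlin t).cos.congr_deriv (by simp [S]; ring)
    have hz : ∀ t, HasDerivAt (fun t => wp - (x t).1) (-(x t).2) t := fun t =>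
      (sol_fst hx t).const_sub wp
    have hJ : ∀ t, HasDerivAt (fun t => e t * ((c / 2 * (wp - (x t).1) - (x t).2) * S t
        - ω * (wp - (x t).1) * C t)) (e t * S t * (b * (wp - (x t).1) - g (x t).1)) t := by
      intro t
      refine ((he t).mul (((((hz t).const_mul (c / 2)).sub (sol_snd hx t)).mul (hS t)).sub
        (((hz t).const_mul ω).mul (hC t)))).congr_deriv ?_
      simp only [Pi.mul_apply, Pi.sub_apply]
      have : b = ω ^ 2 + c ^ 2 / 4 := by linarith
      rw [this]; ring
    have hpi : 0 < Real.pi / ω := div_pos Real.pi_pos hω0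
    have := mono_aux (fun t => (hJ t).neg) (show t₀ ≤ t₀ + Real.pi / ω by linarith) (by
      intro t ht
      have h1 : 0 ≤ S t := by
        apply Real.sin_nonneg_of_nonneg_of_le_pi
        · exact mul_nonneg hω0.le (by linarith [ht.1])
        · have h2 : t - t₀ ≤ Real.pi / ω := by linarith [ht.2]
          rw [le_div_iff₀ hω0] at h2
          linarith
      have h2 : b * (wp - (x t).1) ≤ g (x t).1 := by
        have := hloc (wp - (x t).1) (by linarith [hle t])
          (by have : wp - η < (x t).1 := hT t (ht₀.trans ht.1)
              linarith)
        simpa using this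
      have h3 : 0 ≤ e t * S t := mul_nonneg (Real.exp_pos _).le h1
      nlinarith)
    have hC0 : C t₀ = 1 := by simp [C]
    have hS0 : S t₀ = 0 := by simp [S]
    have hpi' : ω * (t₀ + Real.pi / ω - t₀) = Real.pi := by field_simp; ring
    have hC1 : C (t₀ + Real.pi / ω) = -1 := by simp only [C]; rw [hpi', Real.cos_pi]
    have hS1 : S (t₀ + Real.pi / ω) = 0 := by simp only [S]; rw [hpi', Real.sin_pi]
    simp only [Pi.neg_apply, hC0, hS0, hC1, hS1] at this
    have h4 : 0 ≤ e (t₀ + Real.pi / ω) * (ω * (wp - (x (t₀ + Real.pi / ω)).1)) :=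
      mul_nonneg (Real.exp_pos _).le (mul_nonneg hω0.le (by linarith [hle (t₀ + Real.pi / ω)]))
    have h5 : 0 < e t₀ * ω := mul_pos (Real.exp_pos _) hω0
    by_contra! h
    have h6 : 0 < e t₀ * ω * (wp - (x t₀).1) := mul_pos h5 (by linarith)
    nlinarith
  have hv : (x (T + 1)).2 = 0 := by
    have he : (fun t => (x t).1) =ᶠ[𝓝 (T + 1)] fun _ => wp := by
      filter_upwards [Ioi_mem_nhds (show T < T + 1 by linarith)] with u hu using key u (le_of_lt hu)
    exact (sol_fst hx (T + 1)).unique ((hasDerivAt_const (T + 1) wp).congr_of_eventuallyEq he)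
  have hconst : Sol (fld g c) (fun _ => (wp, 0)) := by
    intro t
    have : fld g c (wp, 0) = 0 := by simp [fld, hgwp]
    rw [this]
    exact hasDerivAt_const _ _
  have hall : ∀ t, (x t).1 = wp := by
    intro t
    have h1 := sol_dist hK (sol_shift hx (T + 1)) hconst (t - (T + 1))
    have h2 : x (0 + (T + 1)) = (wp, 0) := by
      rw [zero_add]; exact Prod.ext (key _ (by linarith)) hv
    rw [h2, dist_self, zero_mul, dist_le_zero, sub_add_cancel] at h1
    rw [h1]
  have : Tendsto (fun t => (x t).1) atBot (𝓝 wp) := by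
    simp only [hall]; exact tendsto_const_nhds
  exact hwp.ne (tendsto_nhds_unique hbot1 this)

end Wave2

section Wave3
open Set Metric
open scoped NNReal

lemma core {h : ℝ → ℝ} {c b₀ b wp : ℝ} (hc : 0 < c) (hC1 : ContDiff ℝ 1 h) (h0 : h 0 = 0)
    (hd0 : HasDerivAt h b₀ 0) (hb₀ : 0 < b₀) (hwp : 0 < wp) (hwp0 : h wp = 0)
    (hpos : ∀ w, 0 < w → w < wp → 0 < h w) (hneg : ∀ w, wp < w → h w < 0)
    (hinf : ∃ w₀, ∀ w, w₀ ≤ w → h w ≤ -1)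
    (hdp : HasDerivAt h (-b) wp) (hb : c ^ 2 / 4 < b) :
    ∃ w v : ℝ → ℝ, (∀ t, HasDerivAt w (v t) t) ∧ (∀ t, HasDerivAt v (h (w t) - c * v t) t) ∧
      Tendsto w atBot (𝓝 0) ∧ Tendsto v atBot (𝓝 0) ∧ Tendsto w atTop (𝓝 wp) ∧
      Tendsto v atTop (𝓝 0) ∧ ¬ Monotone w := by
  have hcont : Continuous h := hC1.continuous
  have hprim : ∀ u : ℝ → ℝ, Continuous u → ∀ w, HasDerivAt (fun w => ∫ s in (0:ℝ)..w, u s) (u w) w :=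
    fun u hu w => (hu.integral_hasStrictDerivAt 0 w).hasDerivAt
  -- choice of W
  obtain ⟨W, hWwp, hWint⟩ : ∃ W, wp < W ∧ ∫ s in (0:ℝ)..W, h s ≤ 0 := by
    obtain ⟨w₀, hw₀⟩ := hinf
    set w₁ := max w₀ (wp + 1) with hw₁
    set I := ∫ s in (0:ℝ)..w₁, h s with hI
    refine ⟨w₁ + |I|, ?_, ?_⟩
    · have := le_max_right w₀ (wp + 1); have := abs_nonneg I; linarith
    · have := mono_aux (F := fun w => -(∫ s in (0:ℝ)..w, h s) - w) (F' := fun w => - h w - 1)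
        (fun w => (hprim h hcont w).neg.sub (hasDerivAt_id w))
        (show w₁ ≤ w₁ + |I| by have := abs_nonneg I; linarith) (by
          intro t ht
          have := hw₀ t ((le_max_left _ _).trans ht.1)
          linarith)
      have := le_abs_self I
      linarith
  have hW0 : 0 < W := hwp.trans hWwp
  set g : ℝ → ℝ := fun w => h (projIcc 0 W hW0.le w) with hgd
  obtain ⟨Kg, hg⟩ : ∃ Kg, LipschitzWith Kg g := by
    obtain ⟨K, hK⟩ := (hC1.locallyLipschitz.locallyLipschitzOn
      (s := Icc 0 W)).exists_lipschitzOnWith_of_compact isCompact_Icc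
    exact ⟨_, hK.to_restrict.comp (LipschitzWith.projIcc hW0.le)⟩
  have hgeq : ∀ w ∈ Icc 0 W, g w = h w := fun w hw => by
    simp only [hgd]; rw [projIcc_of_mem hW0.le hw]
  have hgn : ∀ w ≤ 0, g w = 0 := fun w hw => by
    simp only [hgd]; rw [projIcc_of_le_left hW0.le hw]; exact h0
  have hgW : ∀ w, W ≤ w → g w = h W := fun w hw => by
    simp only [hgd]; rw [projIcc_of_right_le hW0.le hw]
  have hgc : Continuous g := hg.continuous
  set H : ℝ → ℝ := fun w => ∫ s in (0:ℝ)..w, g s with hHd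
  have hH : ∀ w, HasDerivAt H (g w) w := hprim g hgc
  have hH0 : H 0 = 0 := by simp [hHd]
  have hHn : ∀ w ≤ 0, H w ≤ 0 := by
    intro w hw
    have := mono_aux hH hw (fun t ht => (hgn t ht.2).ge)
    linarith
  have hHW : ∀ w, W ≤ w → H w ≤ 0 := by
    intro w hw
    have h1 : H W ≤ 0 := by
      have : H W = ∫ s in (0:ℝ)..W, h s := by
        refine intervalIntegral.integral_congr fun s hs => ?_
        rw [uIcc_of_le hW0.le] at hs
        exact hgeq s hs
      rw [this]; exact hWint
    have := mono_aux (fun t => (hH t).neg) hw (fun t ht => by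
      rw [hgW t ht.1]; have := hneg W hWwp; linarith)
    simp only [Pi.neg_apply] at this
    linarith
  have hzero : ∀ w, 0 < H w → g w = 0 → w = wp := by
    intro w hw hgw
    have h1 : 0 < w := by by_contra! hcon; exact absurd hw (not_lt.2 (hHn w hcon))
    have h2 : w < W := by by_contra! hcon; exact absurd hw (not_lt.2 (hHW w hcon))
    rw [hgeq w ⟨h1.le, h2.le⟩] at hgw
    rcases lt_trichotomy w wp with h3 | h3 | h3
    · exact absurd hgw (hpos w h1 h3).ne'
    · exact h3
    · exact absurd hgw (hneg w h3).ne
  -- local estimates near 0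
  obtain ⟨δ, hδ, hδW, hloc⟩ : ∃ δ, 0 < δ ∧ δ ≤ W ∧ ∀ w, 0 ≤ w → w ≤ δ →
      b₀ / 2 * w ≤ h w ∧ h w ≤ 2 * b₀ * w := by
    have h1 := (hasDerivAt_iff_isLittleO.1 hd0).def (show 0 < b₀ / 2 by positivity)
    obtain ⟨r, hr, hball⟩ := Metric.eventually_nhds_iff.1 h1
    refine ⟨min (r / 2) W, by positivity, min_le_right _ _, fun w hw hwr => ?_⟩
    have hwr' : w ≤ r / 2 := hwr.trans (min_le_left _ _)
    have := hball (y := w) (by rw [Real.dist_eq, sub_zero, abs_of_nonneg hw]; linarith)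
    simp only [h0, sub_zero, smul_eq_mul, Real.norm_eq_abs, abs_of_nonneg hw] at this
    have := abs_le.1 this
    constructor <;> nlinarith [this.1, this.2]
  have hm : ∀ w ≤ δ, b₀ / 2 * w ≤ g w := by
    intro w hw
    rcases le_total w 0 with h1 | h1
    · rw [hgn w h1]; exact mul_nonpos_of_nonneg_of_nonpos (by positivity) h1
    · rw [hgeq w ⟨h1, hw.trans hδW⟩]; exact (hloc w h1 hw).1
  have hM : ∀ w, 0 ≤ w → w ≤ δ → g w ≤ 2 * b₀ * w := by
    intro w h1 hw
    rw [hgeq w ⟨h1, hw.trans hδW⟩]; exact (hloc w h1 hw).2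
  obtain ⟨x, hx, hv, hbot⟩ := unstable hg hδ (show 0 < b₀ / 2 by positivity) (by linarith) hc hm hM hgn
  obtain ⟨hin, htop⟩ := forward hg hc hx hH hH0 hv hbot hHn hHW hzero
  -- local estimate near wp
  obtain ⟨η, hη, hloc2⟩ : ∃ η, 0 < η ∧ ∀ z, 0 ≤ z → z ≤ η →
      ((b + c ^ 2 / 4) / 2) * z ≤ g (wp - z) := by
    have h1 := (hasDerivAt_iff_isLittleO.1 hdp).def (show 0 < (b - c ^ 2 / 4) / 2 by linarith)
    obtain ⟨r, hr, hball⟩ := Metric.eventually_nhds_iff.1 h1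
    refine ⟨min (r / 2) wp, by positivity, fun z hz hzr => ?_⟩
    have hzr' : z ≤ r / 2 := hzr.trans (min_le_left _ _)
    have hzw : z ≤ wp := hzr.trans (min_le_right _ _)
    rw [hgeq _ ⟨by linarith, by linarith⟩]
    have h2 : wp - z - wp = -z := by ring
    have := hball (y := wp - z) (by
      rw [Real.dist_eq, h2, abs_neg, abs_of_nonneg hz]; linarith)
    simp only [h2, hwp0, sub_zero, smul_eq_mul, Real.norm_eq_abs, abs_neg, abs_of_nonneg hz] at this
    have := abs_le.1 this
    nlinarith [this.1, this.2]
  have hnm := not_mono hg hx hwp (by rw [hgeq wp ⟨hwp.le, hWwp.le⟩, hwp0]) hη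
    (show c ^ 2 / 4 < (b + c ^ 2 / 4) / 2 by linarith) hloc2 hbot htop
  refine ⟨fun t => (x t).1, fun t => (x t).2, sol_fst hx, fun t => ?_,
    (continuous_fst.tendsto _).comp hbot, (continuous_snd.tendsto _).comp hbot,
    (continuous_fst.tendsto _).comp htop, (continuous_snd.tendsto _).comp htop, hnm⟩
  have := sol_snd hx t
  rwa [hgeq _ (Ioo_subset_Icc_self (hin t))] at this

end Wave3

section Final

/-- `G u = f (exp u) / exp u`. -/
noncomputable def GG (γ C₁ C₂ u : ℝ) : ℝ :=
  Real.exp ((γ - 1) * u) - C₁ * Real.exp (-u) + C₂ * Real.exp (-(2 * u))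

lemma GG_hasDeriv (γ C₁ C₂ u : ℝ) : HasDerivAt (GG γ C₁ C₂)
    ((γ - 1) * Real.exp ((γ - 1) * u) + C₁ * Real.exp (-u) - 2 * C₂ * Real.exp (-(2 * u))) u := by
  have h1 := ((hasDerivAt_id u).const_mul (γ - 1)).exp
  have h2 := ((hasDerivAt_id u).neg.exp).const_mul C₁
  have h3 := (((hasDerivAt_id u).const_mul 2).neg.exp).const_mul C₂
  refine ((h1.sub h2).add h3).congr_deriv ?_
  simp
  ring

lemma GG_eq {γ C₁ C₂ P : ℝ} (hP : 0 < P) :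
    GG γ C₁ C₂ (Real.log P) = (P ^ γ - C₁ + C₂ / P) / P := by
  have h1 : Real.exp ((γ - 1) * Real.log P) = P ^ γ / P := by
    rw [mul_comm, ← Real.rpow_def_of_pos hP, Real.rpow_sub_one hP.ne']
  have h2 : Real.exp (-Real.log P) = P⁻¹ := by rw [Real.exp_neg, Real.exp_log hP]
  have h3 : Real.exp (-(2 * Real.log P)) = (P ^ 2)⁻¹ := by
    rw [Real.exp_neg, two_mul, Real.exp_add, Real.exp_log hP, sq]
  rw [GG, h1, h2, h3]
  field_simp

lemma GG_deriv_eq {γ C₁ C₂ P : ℝ} (hP : 0 < P) (h0 : P ^ γ - C₁ + C₂ / P = 0) :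
    HasDerivAt (GG γ C₁ C₂) (((γ + 1) * P ^ γ - C₁) / P) (Real.log P) := by
  have h1 : Real.exp ((γ - 1) * Real.log P) = P ^ γ / P := by
    rw [mul_comm, ← Real.rpow_def_of_pos hP, Real.rpow_sub_one hP.ne']
  have h2 : Real.exp (-Real.log P) = P⁻¹ := by rw [Real.exp_neg, Real.exp_log hP]
  have h3 : Real.exp (-(2 * Real.log P)) = (P ^ 2)⁻¹ := by
    rw [Real.exp_neg, two_mul, Real.exp_add, Real.exp_log hP, sq]
  refine (GG_hasDeriv γ C₁ C₂ (Real.log P)).congr_deriv ?_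
  have h4 : C₂ = (C₁ - P ^ γ) * P := by field_simp at h0; linarith
  rw [h1, h2, h3, h4]
  field_simp
  ring

end Final

/-- global existence of an oscillatory profile for `s > 0`: under the invariant
region condition `F₁ ≤ 0` on `(0, P⁺)` and the spiral-point condition
`sμ/k < √(−2f'(P⁺))`, there is a heteroclinic from `(P⁻,0)` to `(P⁺,0)` whose `P`-component
is neither monotone nondecreasing nor monotone nonincreasing on `ℝ`. -/
theorem stmt_10 (γ s μ k Pp Pm C₁ C₂ : ℝ) (hγ : 1 ≤ γ) (hs : 0 < s) (hμ : 0 < μ) (hk : 0 < k)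
    (hPp : 0 < Pp) (hPpPm : Pp < Pm)
    (hC₁ : C₁ = (Pp ^ (γ + 1) - Pm ^ (γ + 1)) / (Pp - Pm))
    (hC₂ : C₂ = Pp * Pm * ((Pp ^ γ - Pm ^ γ) / (Pp - Pm)))
    (f F : ℝ → ℝ)
    (hf : ∀ P : ℝ, f P = P ^ γ - C₁ + C₂ / P)
    (hroot1 : f Pp = 0) (hroot2 : f Pm = 0)
    (hF : ∀ P : ℝ, F P = P ^ (γ + 1) / (γ + 1) - C₁ * P + C₂ * Real.log P)
    (hF₁ : ∀ P : ℝ, 0 < P → P < Pp → F P - (s * μ * P / k) ^ 2 - F Pm ≤ 0)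
    (hspiral : s * μ / k < Real.sqrt (-2 * deriv f Pp)) :
    ∃ P Q : ℝ → ℝ,
      (∀ y : ℝ, 0 < P y) ∧
      (∀ y : ℝ, HasDerivAt P (2 / k ^ 2 * Q y) y) ∧
      (∀ y : ℝ, HasDerivAt Q
        (f (P y) - 2 * μ * s / k ^ 2 * Q y + 2 / k ^ 2 * (Q y) ^ 2 / P y) y) ∧
      Tendsto (fun y => (P y, Q y)) atBot (𝓝 (Pm, 0)) ∧
      Tendsto (fun y => (P y, Q y)) atTop (𝓝 (Pp, 0)) ∧
      ¬ Monotone P ∧ ¬ Antitone P := by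
  have hPm : 0 < Pm := hPp.trans hPpPm
  set a : ℝ := 2 / k ^ 2 with ha
  have ha0 : 0 < a := by positivity
  have hC₂p : 0 < C₂ := by
    rw [hC₂]
    have h1 : Pp ^ γ < Pm ^ γ := Real.rpow_lt_rpow hPp.le hPpPm (by linarith)
    have h2 : 0 < (Pp ^ γ - Pm ^ γ) / (Pp - Pm) := div_pos_of_neg_of_neg (by linarith) (by linarith)
    positivity
  -- the convex function `q P = P f P`
  let q : ℝ → ℝ := fun P => P ^ (γ + 1) + (-C₁ * P + C₂)
  have hq : ∀ P, 0 < P → q P = P * (P ^ γ - C₁ + C₂ / P) := by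
    intro P hP
    simp only [q]
    rw [Real.rpow_add_one hP.ne']
    field_simp
    ring
  have hqconv : StrictConvexOn ℝ (Set.Ici 0) q := by
    refine (strictConvexOn_rpow (by linarith)).add_convexOn ?_
    refine ⟨convex_Ici 0, fun x _ y _ s t _ _ hst => le_of_eq ?_⟩
    simp only [smul_eq_mul]
    linear_combination (-C₂) * hst
  rw [hf] at hroot1 hroot2
  have hqp : q Pp = 0 := by rw [hq _ hPp, hroot1, mul_zero]
  have hqm : q Pm = 0 := by rw [hq _ hPm, hroot2, mul_zero]
  have hq1 : ∀ P, 0 < P → P < Pp → 0 < q P := by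
    intro P hP h
    have := hqconv.slope_strict_mono_adjacent (Set.mem_Ici.2 hP.le) (Set.mem_Ici.2 hPm.le) h hPpPm
    rw [hqp, hqm] at this
    by_contra! hcon
    have : 0 ≤ (0 - q P) / (Pp - P) := div_nonneg (by linarith) (by linarith)
    simp at *
    linarith
  have hq2 : ∀ P, Pp < P → P < Pm → q P < 0 := by
    intro P h h'
    have := hqconv.slope_strict_mono_adjacent (Set.mem_Ici.2 hPp.le) (Set.mem_Ici.2 hPm.le) h h'
    rw [hqp, hqm] at this
    by_contra! hcon
    have h1 : 0 ≤ (q P - 0) / (P - Pp) := div_nonneg (by linarith) (by linarith)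
    have h2 : (0 - q P) / (Pm - P) ≤ 0 := div_nonpos_of_nonpos_of_nonneg (by linarith) (by linarith)
    linarith
  have hqd : 0 < (γ + 1) * Pm ^ γ - C₁ := by
    have h1 : HasDerivAt q ((γ + 1) * Pm ^ γ - C₁) Pm := by
      have h2 := Real.hasDerivAt_rpow_const (x := Pm) (p := γ + 1) (Or.inl hPm.ne')
      refine (h2.add (((hasDerivAt_id Pm).const_mul (-C₁)).add_const C₂)).congr_deriv ?_
      simp
      ring
    have := hqconv.slope_lt_of_hasDerivAt (Set.mem_Ici.2 hPp.le) (Set.mem_Ici.2 hPm.le) hPpPm h1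
    rwa [slope_def_field, hqp, hqm, sub_zero, zero_div] at this
  set um := Real.log Pm with hum
  set up := Real.log Pp with hup
  have hupm : up < um := Real.log_lt_log hPp hPpPm
  have hGq : ∀ u, GG γ C₁ C₂ u = q (Real.exp u) / (Real.exp u) ^ 2 := by
    intro u
    have h1 := GG_eq (γ := γ) (C₁ := C₁) (C₂ := C₂) (Real.exp_pos u)
    rw [Real.log_exp] at h1
    rw [h1, hq _ (Real.exp_pos u)]
    field_simp
  let h : ℝ → ℝ := fun w => -a * GG γ C₁ C₂ (um - w)
  have hder : ∀ w D, HasDerivAt (GG γ C₁ C₂) D (um - w) → HasDerivAt h (a * D) w := by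
    intro w D hD
    have h1 := (hD.comp w ((hasDerivAt_id w).const_sub um)).const_mul (-a)
    exact h1.congr_deriv (by ring)
  have hspiral' : (s * μ / k) ^ 2 < -2 * deriv f Pp := by
    have h0 : 0 ≤ s * μ / k := by positivity
    exact (Real.lt_sqrt h0).1 hspiral
  have hfd : deriv f Pp = ((γ + 1) * Pp ^ γ - C₁) / Pp := by
    have h1 : f = fun P => P ^ γ - C₁ + C₂ / P := funext hf
    have h2 := Real.hasDerivAt_rpow_const (x := Pp) (p := γ) (Or.inl hPp.ne')
    have h3 := (hasDerivAt_inv hPp.ne').const_mul C₂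
    have h4 : HasDerivAt f (γ * Pp ^ (γ - 1) + C₂ * (-(Pp ^ 2)⁻¹)) Pp := by
      rw [h1]
      simp only [div_eq_mul_inv]
      exact (h2.sub_const C₁).add h3
    rw [h4.deriv, Real.rpow_sub_one hPp.ne']
    have h5 : C₂ = (C₁ - Pp ^ γ) * Pp := by field_simp at hroot1; linarith
    rw [h5]
    field_simp
    ring
  obtain ⟨w, v, hw, hv, hwb, hvb, hwt, hvt, hnm⟩ := core (h := h) (c := a * (μ * s))
    (b₀ := a * (((γ + 1) * Pm ^ γ - C₁) / Pm)) (b := -(a * deriv f Pp)) (wp := um - up)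
    (by positivity)
    (by
      have : ContDiff ℝ 1 (GG γ C₁ C₂) := by unfold GG; fun_prop
      exact contDiff_const.mul (this.comp (contDiff_const.sub contDiff_id)))
    (by simp only [h]; rw [sub_zero, hum, GG_eq hPm, hroot2]; simp)
    (hder 0 _ (by rw [sub_zero]; exact GG_deriv_eq hPm hroot2))
    (by positivity) (by linarith)
    (by simp only [h]; rw [sub_sub_cancel, hup, GG_eq hPp, hroot1]; simp)
    (by
      intro w h1 h2
      simp only [h]
      rw [hGq]
      have h3 : q (Real.exp (um - w)) < 0 := by
        apply hq2
        · rw [← Real.log_lt_iff_lt_exp hPp]; linarith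
        · rw [← Real.lt_log_iff_exp_lt hPm]; linarith
      have h4 : q (Real.exp (um - w)) / (Real.exp (um - w)) ^ 2 < 0 :=
        div_neg_of_neg_of_pos h3 (by positivity)
      nlinarith)
    (by
      intro w h1
      simp only [h]
      rw [hGq]
      have h3 : 0 < q (Real.exp (um - w)) := by
        apply hq1 _ (Real.exp_pos _)
        rw [← Real.lt_log_iff_exp_lt hPp]; linarith
      have h4 : 0 < q (Real.exp (um - w)) / (Real.exp (um - w)) ^ 2 := by positivity
      nlinarith)
    (by
      refine ⟨um + max 1 ((C₁ + 1 / a) / C₂), fun w hw => ?_⟩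
      set y := Real.exp (w - um) with hy
      have hy0 : max 1 ((C₁ + 1 / a) / C₂) ≤ y := by
        have := Real.add_one_le_exp (w - um)
        linarith
      have hy1 : 1 ≤ y := (le_max_left _ _).trans hy0
      have hy2 : (C₁ + 1 / a) / C₂ ≤ y := (le_max_right _ _).trans hy0
      rw [div_le_iff₀ hC₂p] at hy2
      have e1 : Real.exp (-(um - w)) = y := by rw [hy]; congr 1; ring
      have e2 : Real.exp (-(2 * (um - w))) = y * y := by
        rw [hy, ← Real.exp_add]; congr 1; ring
      simp only [h, GG]
      rw [e1, e2]
      have h1 := Real.exp_pos ((γ - 1) * (um - w))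
      have h2 : 1 / a ≤ y * (C₂ * y - C₁) := by
        have h3 : 1 / a ≤ C₂ * y - C₁ := by linarith
        have h4 : 0 < 1 / a := by positivity
        nlinarith
      have h5 : 1 / a ≤ Real.exp ((γ - 1) * (um - w)) - C₁ * y + C₂ * (y * y) := by
        nlinarith
      have h6 : a * (1 / a) = 1 := by field_simp
      have h7 := mul_le_mul_of_nonneg_left h5 ha0.le
      linarith)
    (by
      rw [neg_neg]
      apply hder
      rw [sub_sub_cancel, hfd]
      exact GG_deriv_eq hPp hroot1)
    (by
      have h1 : (a * (μ * s)) ^ 2 / 4 = a / 2 * (s * μ / k) ^ 2 := by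
        rw [ha]; field_simp; ring
      rw [h1]
      have := mul_lt_mul_of_pos_left hspiral' (show 0 < a / 2 by positivity)
      linarith)
  have hP : ∀ t, HasDerivAt (fun t => Real.exp (um - w t)) (Real.exp (um - w t) * (-v t)) t :=
    fun t => ((hw t).const_sub um).exp
  have hPb : Tendsto (fun t => Real.exp (um - w t)) atBot (𝓝 Pm) := by
    have := (Real.continuous_exp.tendsto _).comp (hwb.const_sub um)
    rwa [sub_zero, hum, Real.exp_log hPm] at this
  have hPt : Tendsto (fun t => Real.exp (um - w t)) atTop (𝓝 Pp) := by
    have := (Real.continuous_exp.tendsto _).comp (hwt.const_sub um)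
    rwa [sub_sub_cancel, hup, Real.exp_log hPp] at this
  refine ⟨fun t => Real.exp (um - w t), fun t => Real.exp (um - w t) * (-v t) / a,
    fun t => Real.exp_pos _, fun t => ?_, fun t => ?_, ?_, ?_, ?_, ?_⟩
  · refine (hP t).congr_deriv ?_
    field_simp
  · refine (((hP t).mul (hv t).neg).div_const a).congr_deriv ?_
    have h1 := GG_eq (γ := γ) (C₁ := C₁) (C₂ := C₂) (Real.exp_pos (um - w t))
    rw [Real.log_exp, ← hf] at h1
    have h2 : f (Real.exp (um - w t)) = Real.exp (um - w t) * GG γ C₁ C₂ (um - w t) := by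
      rw [h1]; field_simp
    have h3 : 2 * μ * s / k ^ 2 = a * (μ * s) := by rw [ha]; ring
    rw [h2, h3]
    simp only [h, Pi.neg_apply]
    have := Real.exp_pos (um - w t)
    field_simp
    ring
  · have := ((hPb.mul hvb.neg).div_const a)
    simp only [neg_zero, mul_zero, zero_div] at this
    exact hPb.prodMk_nhds this
  · have := ((hPt.mul hvt.neg).div_const a)
    simp only [neg_zero, mul_zero, zero_div] at this
    exact hPt.prodMk_nhds this
  · intro hm
    have h1 := hm.le_of_tendsto hPb 0
    have h2 := hm.ge_of_tendsto hPt 0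
    linarith
  · intro hm
    apply hnm
    intro x y hxy
    have := Real.exp_le_exp.1 (hm hxy)
    linarith
end

section
/- Let γ ≥ 1, s < 0, μ, k > 0, and let 0 < P⁻ < P⁺ be the two positive roots of f(P) = P^γ − C₁ + C₂/P, where C₁ = ((P⁺)^{γ+1} − (P⁻)^{γ+1})/(P⁺ − P⁻) and C₂ = P⁺P⁻·((P⁺)^γ − (P⁻)^γ)/(P⁺ − P⁻). Define F(P) = P^{γ+1}/(γ+1) − C₁P + C₂·ln P and F̃₁(ξ) = F(ξ) − (sμξ/k)² − F(P⁺). If F̃₁(ξ) ≤ 0 for all 0 < ξ < P⁻, then there exists a heteroclinic solution (P, Q̃) : ℝ → (0,∞) × ℝ of the system P' = (2/k²)Q̃, Q̃' = f(P) − (2μs/k²)Q̃ + (2/k²)Q̃²/P with (P, Q̃)(y) → (P⁻, 0) as y → −∞ and (P, Q̃)(y) → (P⁺, 0) as y → +∞. If in addition −sμ/k < √(−2f'(P⁻)), then the profile P is non-monotone on ℝ. -/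
open Filter Topology

def IsSol11 (h : ℝ → ℝ) (a : ℝ) (u v : ℝ → ℝ) : Prop :=
  ∀ y, HasDerivAt u (v y) y ∧ HasDerivAt v (h (u y) + a * v y) y

theorem lip11 {h : ℝ → ℝ} {K : NNReal} (hh : LipschitzWith K h) (a : ℝ) :
    ∃ K' : NNReal, LipschitzWith K' (fun x : ℝ × ℝ => ((x.2, h x.1 + a * x.2) : ℝ × ℝ)) := by
  have h1 : LipschitzWith 1 (fun x : ℝ × ℝ => x.2) := LipschitzWith.prod_snd
  have h2 : LipschitzWith (K * 1) (fun x : ℝ × ℝ => h x.1) := hh.comp LipschitzWith.prod_fst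
  have h3 : LipschitzWith (‖a‖₊ * 1) (fun x : ℝ × ℝ => a * x.2) :=
    (lipschitzWith_smul a).comp LipschitzWith.prod_snd
  exact ⟨_, h1.prodMk (h2.add h3)⟩

theorem local11 {h : ℝ → ℝ} {K : NNReal} (hh : LipschitzWith K h) (M : ℝ)
    (hM : ∀ x, |h x| ≤ M) (a : ℝ) (ha : 0 < a) (u0 v0 T : ℝ) (hT : 0 < T) :
    ∃ x : ℝ → ℝ × ℝ, x 0 = (u0, v0) ∧ ∀ t ∈ Set.Ioo (-T) T,
      HasDerivAt x ((x t).2, h (x t).1 + a * (x t).2) t := by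
  have hM0 : 0 ≤ M := (abs_nonneg _).trans (hM 0)
  set z0 := v0 - a * u0 with hz0
  set R := |z0| + M * T with hR
  have hR0 : 0 ≤ R := by positivity
  have hRR : -R ≤ R := by linarith
  set cl : ℝ → ℝ := fun z => (Set.projIcc (-R) R hRR z : ℝ) with hcl
  have hclL : LipschitzWith 1 cl := by
    have := (LipschitzWith.subtype_val (Set.Icc (-R) R)).comp (LipschitzWith.projIcc hRR)
    rw [one_mul] at this
    exact this
  have hclb : ∀ z, |cl z| ≤ R := fun z => abs_le.2 ((Set.projIcc (-R) R hRR z).2)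
  let e : NNReal := ⟨Real.exp (a * T), (Real.exp_pos _).le⟩
  let F : ℝ → ℝ × ℝ → ℝ × ℝ := fun t x => (Real.exp (-(a * t)) * cl x.2, h (Real.exp (a * t) * x.1))
  let L : NNReal := e * ⟨R, hR0⟩ + ⟨M, hM0⟩
  let T' : NNReal := ⟨T, hT.le⟩
  have hexp : ∀ t ∈ Set.Icc (-T) T, Real.exp (-(a * t)) ≤ Real.exp (a * T) ∧
      Real.exp (a * t) ≤ Real.exp (a * T) := by
    intro t ht
    constructor <;> apply Real.exp_le_exp.2 <;> nlinarith [ht.1, ht.2]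
  have pl : IsPicardLindelof F (tmin := -T) (tmax := T) ⟨0, by constructor <;> linarith⟩
      (u0, z0) (L * T') 0 L (max (e * 1) (K * e)) := by
    constructor
    · intro t ht
      apply LipschitzWith.lipschitzOnWith
      obtain ⟨e1, e2⟩ := hexp t ht
      apply LipschitzWith.prodMk
      · apply LipschitzWith.of_dist_le_mul
        intro x y
        simp only [Real.dist_eq, ← mul_sub, abs_mul, abs_of_pos (Real.exp_pos _)]
        have h1 := hclL.dist_le_mul x.2 y.2
        have h2 : dist x.2 y.2 ≤ dist x y := le_max_right _ _
        simp only [Real.dist_eq, NNReal.coe_one, one_mul] at h1 h2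
        push_cast
        rw [mul_one]
        exact mul_le_mul e1 (h1.trans h2) (abs_nonneg _) (Real.exp_pos _).le
      · apply LipschitzWith.of_dist_le_mul
        intro x y
        have h1 := hh.dist_le_mul (Real.exp (a * t) * x.1) (Real.exp (a * t) * y.1)
        have h2 : dist x.1 y.1 ≤ dist x y := le_max_left _ _
        simp only [Real.dist_eq, ← mul_sub, abs_mul, abs_of_pos (Real.exp_pos _)] at h1 h2 ⊢
        refine h1.trans ?_
        push_cast
        rw [mul_assoc]
        apply mul_le_mul_of_nonneg_left _ K.2
        exact mul_le_mul e2 h2 (abs_nonneg _) (Real.exp_pos _).le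
    · intro x hx
      apply Continuous.continuousOn
      have := hh.continuous
      fun_prop
    · intro t ht x hx
      obtain ⟨e1, e2⟩ := hexp t ht
      have A : 0 ≤ Real.exp (a * T) * R := by positivity
      change max _ _ ≤ _
      apply max_le
      · simp only [F, Real.norm_eq_abs, abs_mul, abs_of_pos (Real.exp_pos _)]
        have := mul_le_mul e1 (hclb x.2) (abs_nonneg _) (Real.exp_pos _).le
        change _ ≤ Real.exp (a * T) * R + M
        linarith
      · change |h _| ≤ Real.exp (a * T) * R + M
        linarith [hM (Real.exp (a * t) * x.1)]
    · have : ((L * T' : NNReal) : ℝ) = L * T := by rw [NNReal.coe_mul]; rfl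
      rw [this]; simp
  obtain ⟨α, hα0, hα⟩ := pl.exists_eq_forall_mem_Icc_hasDerivWithinAt₀
  have hα1 : ∀ t ∈ Set.Ioo (-T) T, HasDerivAt (fun t => (α t).1) (F t (α t)).1 t ∧
      HasDerivAt (fun t => (α t).2) (F t (α t)).2 t := by
    intro t ht
    have := (hα t ⟨ht.1.le, ht.2.le⟩).hasDerivAt (Icc_mem_nhds ht.1 ht.2)
    exact ⟨(ContinuousLinearMap.fst ℝ ℝ ℝ).hasFDerivAt.comp_hasDerivAt t this,
      (ContinuousLinearMap.snd ℝ ℝ ℝ).hasFDerivAt.comp_hasDerivAt t this⟩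
  have hz : ∀ t ∈ Set.Ioo (-T) T, cl (α t).2 = (α t).2 := by
    intro t ht
    have h0 : (0 : ℝ) ∈ Set.Ioo (-T) T := by constructor <;> linarith
    have := Convex.norm_image_sub_le_of_norm_hasDerivWithin_le (f := fun t => (α t).2) (C := M)
      (fun t ht => (hα1 t ht).2.hasDerivWithinAt) (fun t ht => hM _) (convex_Ioo _ _) h0 ht
    have h00 : (α 0).2 = z0 := by rw [hα0]
    rw [h00, Real.norm_eq_abs, Real.norm_eq_abs, sub_zero] at this
    have h3 : M * |t| ≤ M * T := mul_le_mul_of_nonneg_left (abs_le.2 ⟨ht.1.le, ht.2.le⟩) hM0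
    have h4 : |(α t).2| ≤ R := by
      have := abs_sub_abs_le_abs_sub (α t).2 z0
      linarith
    simp only [cl]
    rw [Set.projIcc_of_mem hRR (abs_le.1 h4)]
  refine ⟨fun t => (Real.exp (a * t) * (α t).1, (α t).2 + a * (Real.exp (a * t) * (α t).1)), ?_, ?_⟩
  · have hα0' : α 0 = (u0, z0) := hα0
    simp [hα0', hz0]
  · intro t ht
    obtain ⟨h1, h2⟩ := hα1 t ht
    have he : HasDerivAt (fun t => Real.exp (a * t)) (Real.exp (a * t) * (a * 1)) t :=
      ((hasDerivAt_id t).const_mul a).exp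
    have h3 := he.mul h1
    have e0 : Real.exp (a * t) * Real.exp (-(a * t)) = 1 := by rw [← Real.exp_add]; simp
    have h3' : HasDerivAt (fun t => Real.exp (a * t) * (α t).1)
        ((α t).2 + a * (Real.exp (a * t) * (α t).1)) t := by
      refine HasDerivAt.congr_deriv h3 ?_
      change Real.exp (a * t) * (a * 1) * (α t).1 +
        Real.exp (a * t) * (Real.exp (-(a * t)) * cl (α t).2) = _
      rw [hz t ht]
      linear_combination (α t).2 * e0
    have h4 := h2.add (h3'.const_mul a)
    exact h3'.prodMk h4

theorem global11 {h : ℝ → ℝ} {K : NNReal} (hh : LipschitzWith K h) (M : ℝ)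
    (hM : ∀ x, |h x| ≤ M) (a : ℝ) (ha : 0 < a) (u0 v0 : ℝ) :
    ∃ u v : ℝ → ℝ, u 0 = u0 ∧ v 0 = v0 ∧ IsSol11 h a u v := by
  have hloc := fun T : ℝ => fun hT : 0 < T => local11 hh M hM a ha u0 v0 T hT
  choose! x hx0 hx using hloc
  obtain ⟨K', hK'⟩ := lip11 hh a
  have huniq : ∀ S T, 0 < S → 0 < T → ∀ t, |t| < S → |t| < T → x S t = x T t := by
    intro S T hS hT t h1 h2
    have hm : 0 < min S T := lt_min hS hT
    refine ODE_solution_unique_of_mem_Ioo (a := -min S T) (b := min S T) (t₀ := 0)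
      (v := fun _ => (fun x : ℝ × ℝ => ((x.2, h x.1 + a * x.2) : ℝ × ℝ))) (s := fun _ => Set.univ)
      (K := K') (fun _ _ => hK'.lipschitzOnWith) ⟨by linarith, hm⟩ ?_ ?_ ?_ ?_
    · intro t ht
      refine ⟨hx S hS t ⟨?_, ?_⟩, trivial⟩
      · linarith [min_le_left S T, ht.1]
      · linarith [min_le_left S T, ht.2]
    · intro t ht
      refine ⟨hx T hT t ⟨?_, ?_⟩, trivial⟩
      · linarith [min_le_right S T, ht.1]
      · linarith [min_le_right S T, ht.2]
    · rw [hx0 S hS, hx0 T hT]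
    · exact abs_lt.1 (lt_min h1 h2)
  have hd : ∀ t, HasDerivAt (fun t => x (|t| + 1) t)
      ((x (|t| + 1) t).2, h (x (|t| + 1) t).1 + a * (x (|t| + 1) t).2) t := by
    intro t
    have hp : 0 < |t| + 1 := by positivity
    have ht : t ∈ Set.Ioo (-(|t| + 1)) (|t| + 1) := abs_lt.1 (lt_add_one _)
    refine (hx (|t| + 1) hp t ht).congr_of_eventuallyEq ?_
    filter_upwards [Ioo_mem_nhds ht.1 ht.2] with s hs
    exact huniq _ _ (by positivity) hp s (lt_add_one _) (abs_lt.2 hs)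
  refine ⟨fun t => (x (|t| + 1) t).1, fun t => (x (|t| + 1) t).2, ?_, ?_, fun t => ⟨?_, ?_⟩⟩
  · simp [hx0]
  · simp [hx0]
  · exact hasFDerivAt_fst.comp_hasDerivAt t (hd t)
  · exact hasFDerivAt_snd.comp_hasDerivAt t (hd t)

theorem unique11 {h : ℝ → ℝ} {K : NNReal} (hh : LipschitzWith K h) {a : ℝ} {u v u' v' : ℝ → ℝ}
    (h1 : IsSol11 h a u v) (h2 : IsSol11 h a u' v') (t : ℝ) (hu : u t = u' t) (hv : v t = v' t) :
    u = u' ∧ v = v' := by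
  obtain ⟨K', hK'⟩ := lip11 hh a
  have := ODE_solution_unique_univ (f := fun t => (u t, v t)) (g := fun t => (u' t, v' t)) (t₀ := t)
      (v := fun _ => (fun x : ℝ × ℝ => ((x.2, h x.1 + a * x.2) : ℝ × ℝ))) (s := fun _ => Set.univ)
      (K := K') (fun _ => hK'.lipschitzOnWith) (fun t => ⟨(h1 t).1.prodMk (h1 t).2, trivial⟩)
      (fun t => ⟨(h2 t).1.prodMk (h2 t).2, trivial⟩) (by simp [hu, hv])
  exact ⟨funext fun t => congrArg Prod.fst (congrFun this t),
    funext fun t => congrArg Prod.snd (congrFun this t)⟩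

theorem equil11 {h : ℝ → ℝ} {K : NNReal} (hh : LipschitzWith K h) {a : ℝ} {u v : ℝ → ℝ}
    (h1 : IsSol11 h a u v) (t : ℝ) (hu : h (u t) = 0) (hv : v t = 0) : ∀ y, u y = u t := by
  have h2 : IsSol11 h a (fun _ => u t) (fun _ => 0) := by
    intro y
    refine ⟨hasDerivAt_const _ _, ?_⟩
    simpa [hu] using hasDerivAt_const y (0 : ℝ)
  exact fun y => congrFun (unique11 hh h1 h2 t rfl hv).1 y

theorem contdep11 {h : ℝ → ℝ} {K : NNReal} (hh : LipschitzWith K h) (a : ℝ) (u0 : ℝ)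
    (U V : ℝ → ℝ → ℝ) (hU : ∀ c, U c 0 = u0) (hV : ∀ c, V c 0 = c)
    (hs : ∀ c, IsSol11 h a (U c) (V c)) (y : ℝ) (hy : 0 ≤ y) :
    Continuous (fun c => U c y) ∧ Continuous (fun c => V c y) := by
  obtain ⟨K', hK'⟩ := lip11 hh a
  have key : ∀ c d, dist (U c y, V c y) (U d y, V d y) ≤ dist c d * Real.exp (K' * (y - 0)) := by
    intro c d
    have hd : ∀ c t, HasDerivAt (fun t => (U c t, V c t)) (V c t, h (U c t) + a * V c t) t :=
      fun c t => (hs c t).1.prodMk (hs c t).2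
    refine dist_le_of_trajectories_ODE (f := fun t => (U c t, V c t)) (g := fun t => (U d t, V d t))
      (v := fun _ => (fun x : ℝ × ℝ => ((x.2, h x.1 + a * x.2) : ℝ × ℝ))) (a := 0) (b := y)
      (fun _ => hK') ?_ ?_ ?_ ?_ ?_ y ⟨hy, le_rfl⟩
    · exact fun t _ => (hd c t).continuousAt.continuousWithinAt
    · exact fun t _ => (hd c t).hasDerivWithinAt
    · exact fun t _ => (hd d t).continuousAt.continuousWithinAt
    · exact fun t _ => (hd d t).hasDerivWithinAt
    · simp [Prod.dist_eq, hU, hV]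
  have hc : Continuous (fun c => (U c y, V c y)) := by
    have : LipschitzWith ⟨Real.exp (K' * (y - 0)), (Real.exp_pos _).le⟩
        (fun c => (U c y, V c y)) := by
      apply LipschitzWith.of_dist_le_mul
      intro c d
      have := key c d
      rw [mul_comm] at this
      exact this
    exact this.continuous
  exact ⟨hc.fst, hc.snd⟩


theorem limzero11 {f f' : ℝ → ℝ} {l c : ℝ} (hf : ∀ y, HasDerivAt f (f' y) y)
    (h1 : Tendsto f atTop (𝓝 l)) (h2 : Tendsto f' atTop (𝓝 c)) : c = 0 := by
  have hex : ∀ y : ℝ, ∃ z, y < z ∧ f' z = f (y + 1) - f y := by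
    intro y
    obtain ⟨z, hz, hz'⟩ := exists_hasDerivAt_eq_slope f f' (lt_add_one y)
      (fun t _ => (hf t).continuousAt.continuousWithinAt) (fun t _ => hf t)
    exact ⟨z, hz.1, by rw [hz']; simp⟩
  choose z hz hz' using hex
  have h3 : Tendsto z atTop atTop := tendsto_atTop_mono (fun y => (hz y).le) tendsto_id
  have h4 : Tendsto (fun y => f (y + 1) - f y) atTop (𝓝 (l - l)) :=
    (h1.comp (tendsto_atTop_add_const_right _ 1 tendsto_id)).sub h1
  have h5 : Tendsto (fun y => f (y + 1) - f y) atTop (𝓝 c) := by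
    refine (h2.comp h3).congr fun y => ?_
    exact hz' y
  simpa using tendsto_nhds_unique h5 h4

theorem mono11 {f f' : ℝ → ℝ} (hf : ∀ y, HasDerivAt f (f' y) y) (h : ∀ y, 0 ≤ f' y) :
    Monotone f :=
  monotone_of_deriv_nonneg (fun y => (hf y).differentiableAt) (fun y => by rw [(hf y).deriv]; exact h y)

theorem anti11 {f f' : ℝ → ℝ} (hf : ∀ y, HasDerivAt f (f' y) y) (h : ∀ y, f' y ≤ 0) :
    Antitone f :=
  antitone_of_deriv_nonpos (fun y => (hf y).differentiableAt) (fun y => by rw [(hf y).deriv]; exact h y)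

theorem prim11 {h : ℝ → ℝ} (hh : Continuous h) : ∃ G : ℝ → ℝ, ∀ u, HasDerivAt G (h u) u :=
  ⟨fun u => ∫ t in (0:ℝ)..u, h t, fun _ => intervalIntegral.integral_hasDerivAt_right
    (hh.intervalIntegrable _ _) (hh.stronglyMeasurableAtFilter _ _) hh.continuousAt⟩

theorem energy11 {h G : ℝ → ℝ} (hG : ∀ u, HasDerivAt G (h u) u) {a : ℝ} {u v : ℝ → ℝ}
    (hs : IsSol11 h a u v) (y : ℝ) :
    HasDerivAt (fun y => v y ^ 2 / 2 - G (u y)) (a * v y ^ 2) y := by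
  have h1 := (((hs y).2.pow 2).div_const 2).sub ((hG (u y)).comp y (hs y).1)
  refine HasDerivAt.congr_deriv h1 ?_
  simp; ring

theorem shoot11 {h : ℝ → ℝ} {K : NNReal} (hh : LipschitzWith K h) (M : ℝ)
    (hM : ∀ x, |h x| ≤ M) (a : ℝ) (ha : 0 < a) (us up : ℝ) (hus : us < up)
    (hneg : ∀ u, u < up → h u < 0) (hzero : ∀ u, up ≤ u → h u = 0) :
    ∃ u v : ℝ → ℝ, IsSol11 h a u v ∧ u 0 = us ∧ (∀ y, 0 ≤ y → us ≤ u y ∧ u y < up) ∧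
      Tendsto u atTop (𝓝 up) ∧ Tendsto v atTop (𝓝 0) := by
  have hnp : ∀ u, h u ≤ 0 := fun u => by
    rcases lt_or_ge u up with h1 | h1
    · exact (hneg u h1).le
    · exact (hzero u h1).le
  obtain ⟨G, hG⟩ := prim11 hh.continuous
  have hGanti : Antitone G := anti11 hG hnp
  have hGge : ∀ u, G up ≤ G u := by
    intro u
    rcases le_or_gt u up with h1 | h1
    · exact hGanti h1
    · have := Convex.norm_image_sub_le_of_norm_hasDerivWithin_le (f := G) (C := 0) (s := Set.Ici up)
        (fun t _ => (hG t).hasDerivWithinAt) (fun t ht => by simp [hzero t ht])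
        (convex_Ici _) (x := up) (y := u) (by simp) h1.le
      simp only [zero_mul, norm_le_zero_iff] at this
      linarith
  have hex := fun c : ℝ => global11 hh M hM a ha us c
  choose U V hU hV hs using hex
  have hcd := contdep11 hh a us U V hU hV hs
  have hE : ∀ c, Monotone (fun y => V c y ^ 2 / 2 - G (U c y)) := fun c =>
    mono11 (energy11 hG (hs c)) (fun y => by positivity)
  have hVneg : ∀ c y, V c y < 0 → ∀ z, y ≤ z → V c z < 0 := by
    intro c y hy z hz
    have hd : ∀ t, HasDerivAt (fun t => V c t * Real.exp (-a * t))
        (h (U c t) * Real.exp (-a * t)) t := by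
      intro t
      have he : HasDerivAt (fun t => Real.exp (-a * t)) (Real.exp (-a * t) * (-a * 1)) t :=
        ((hasDerivAt_id t).const_mul (-a)).exp
      refine HasDerivAt.congr_deriv ((hs c t).2.mul he) ?_
      ring
    have hanti := anti11 hd (fun t => mul_nonpos_of_nonpos_of_nonneg (hnp _) (Real.exp_pos _).le)
    have h1 := hanti hz
    simp only at h1
    have h2 : V c y * Real.exp (-a * y) < 0 := mul_neg_of_neg_of_pos hy (Real.exp_pos _)
    by_contra hcon
    have : 0 ≤ V c z * Real.exp (-a * z) := mul_nonneg (not_lt.1 hcon) (Real.exp_pos _).le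
    linarith
  set A : Set ℝ := {c | ∃ y, 0 ≤ y ∧ V c y < 0} with hA
  set B : Set ℝ := {c | ∃ y, 0 ≤ y ∧ 0 < V c y ∧ -G up < V c y ^ 2 / 2 - G (U c y)} with hB
  have hAo : IsOpen A := by
    have : A = ⋃ y ∈ Set.Ici (0 : ℝ), {c | V c y < 0} := by
      ext c; simp [hA]
    rw [this]
    exact isOpen_biUnion fun y hy => isOpen_lt (hcd y hy).2 continuous_const
  have hGc : Continuous G := continuous_iff_continuousAt.2 fun u => (hG u).continuousAt
  have hBo : IsOpen B := by
    have : B = ⋃ y ∈ Set.Ici (0 : ℝ), {c | 0 < V c y ∧ -G up < V c y ^ 2 / 2 - G (U c y)} := by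
      ext c; simp only [hB, Set.mem_setOf_eq, Set.mem_iUnion, Set.mem_Ici, exists_prop]
    rw [this]
    refine isOpen_biUnion fun y hy => IsOpen.inter ?_ ?_
    · exact isOpen_lt continuous_const (hcd y hy).2
    · exact isOpen_lt continuous_const
        ((((hcd y hy).2).pow 2).div_const 2 |>.sub (hGc.comp (hcd y hy).1))
  have hBpos : ∀ c y, 0 < V c y → -G up < V c y ^ 2 / 2 - G (U c y) → ∀ z, y ≤ z → 0 < V c z := by
    intro c y h1 h2 z hz
    by_contra hcon
    have hcont : ContinuousOn (V c) (Set.Icc y z) :=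
      fun t _ => (hs c t).2.continuousAt.continuousWithinAt
    have hm : (0 : ℝ) ∈ Set.Icc (V c z) (V c y) := ⟨not_lt.1 hcon, h1.le⟩
    obtain ⟨t, ht, ht0⟩ := intermediate_value_Icc' hz hcont hm
    have h3 := hE c ht.1
    simp only [ht0] at h3
    have := hGge (U c t)
    norm_num at h3
    linarith
  have hdisj : ¬ (Set.univ ∩ (A ∩ B)).Nonempty := by
    rintro ⟨c, -, ⟨y, hy, hy1⟩, ⟨z, hz, hz1, hz2⟩⟩
    have h1 := hVneg c y hy1 (max y z) (le_max_left _ _)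
    have h2 := hBpos c z hz1 hz2 (max y z) (le_max_right _ _)
    linarith
  have hAne : (Set.univ ∩ A).Nonempty := ⟨-1, trivial, 0, le_rfl, by rw [hV]; norm_num⟩
  have hBne : (Set.univ ∩ B).Nonempty := by
    refine ⟨G us - G up + 2, trivial, 0, le_rfl, ?_, ?_⟩
    · rw [hV]; linarith [hGge us]
    · rw [hV, hU]; nlinarith [hGge us]
  have hnot : ¬ (Set.univ ⊆ A ∪ B) := fun hsub =>
    hdisj (isPreconnected_univ A B hAo hBo hsub hAne hBne)
  obtain ⟨c, -, hc⟩ := Set.not_subset.1 hnot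
  have hcA : ∀ y, 0 ≤ y → 0 ≤ V c y := by
    intro y hy
    by_contra hcon
    exact hc (Or.inl ⟨y, hy, not_le.1 hcon⟩)
  have hcB : ∀ y, 0 ≤ y → V c y ^ 2 / 2 - G (U c y) ≤ -G up := by
    intro y hy
    by_contra hcon
    push Not at hcon
    rcases (hcA y hy).eq_or_lt with h0 | h0
    · rw [← h0] at hcon
      have := hGge (U c y)
      norm_num at hcon
      linarith
    · exact hc (Or.inr ⟨y, hy, h0, hcon⟩)
  have hlt : ∀ y, 0 ≤ y → U c y < up := by
    intro y hy
    by_contra hcon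
    push Not at hcon
    have h1 := hcB y hy
    have h2 := hGanti hcon
    have h3 : V c y = 0 := by
      have : V c y ^ 2 ≤ 0 := by linarith
      exact pow_eq_zero_iff (two_ne_zero) |>.1 (le_antisymm this (sq_nonneg _))
    have h4 := equil11 hh (hs c) y (hzero _ hcon) h3 0
    rw [hU] at h4
    linarith
  have hUmono : MonotoneOn (U c) (Set.Ici 0) := by
    apply monotoneOn_of_deriv_nonneg (convex_Ici _)
    · exact fun t _ => (hs c t).1.continuousAt.continuousWithinAt
    · exact fun t _ => (hs c t).1.differentiableAt.differentiableWithinAt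
    · intro t ht
      rw [(hs c t).1.deriv]
      rw [interior_Ici] at ht
      exact hcA t (le_of_lt ht)
  have hUlim : ∃ l, Tendsto (U c) atTop (𝓝 l) := by
    have hm : Monotone (fun y => U c (max y 0)) := fun x y hxy =>
      hUmono (Set.mem_Ici.2 (le_max_right _ _)) (Set.mem_Ici.2 (le_max_right _ _)) (max_le_max_right 0 hxy)
    have hb : BddAbove (Set.range fun y => U c (max y 0)) :=
      ⟨up, by rintro _ ⟨y, rfl⟩; exact (hlt _ (le_max_right _ _)).le⟩
    refine ⟨_, (tendsto_atTop_ciSup hm hb).congr' ?_⟩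
    filter_upwards [eventually_ge_atTop 0] with y hy
    rw [max_eq_left hy]
  obtain ⟨l, hl⟩ := hUlim
  have hElim : ∃ e, Tendsto (fun y => V c y ^ 2 / 2 - G (U c y)) atTop (𝓝 e) := by
    refine ⟨_, tendsto_atTop_ciSup (hE c) ⟨-G up, ?_⟩⟩
    rintro _ ⟨y, rfl⟩
    exact (hE c (le_max_left y 0)).trans (hcB _ (le_max_right _ _))
  obtain ⟨e, he⟩ := hElim
  have hV2 : Tendsto (fun y => Real.sqrt (2 * ((V c y ^ 2 / 2 - G (U c y)) + G (U c y)))) atTop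
      (𝓝 (Real.sqrt (2 * (e + G l)))) :=
    (Real.continuous_sqrt.tendsto _).comp
      ((he.add ((hGc.tendsto l).comp hl)).const_mul 2)
  have hVlim : Tendsto (V c) atTop (𝓝 (Real.sqrt (2 * (e + G l)))) := by
    refine hV2.congr' ?_
    filter_upwards [eventually_ge_atTop 0] with y hy
    rw [show 2 * ((V c y ^ 2 / 2 - G (U c y)) + G (U c y)) = V c y ^ 2 by ring,
      Real.sqrt_sq (hcA y hy)]
  rw [limzero11 (fun y => (hs c y).1) hl hVlim] at hVlim
  have hV'lim : Tendsto (fun y => h (U c y) + a * V c y) atTop (𝓝 (h l + a * 0)) :=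
    ((hh.continuous.tendsto l).comp hl).add (hVlim.const_mul a)
  have hhl := limzero11 (fun y => (hs c y).2) hVlim hV'lim
  have hlup : l = up := by
    apply le_antisymm
    · refine le_of_tendsto hl ?_
      filter_upwards [eventually_ge_atTop 0] with y hy
      exact (hlt y hy).le
    · by_contra hcon
      have := hneg l (not_le.1 hcon)
      linarith
  refine ⟨U c, V c, hs c, hU c, fun y hy => ⟨?_, hlt y hy⟩, hlup ▸ hl, hVlim⟩
  rw [← hU c]
  exact hUmono (by simp) hy hy


theorem clamp11 {g : ℝ → ℝ} (hg : ContDiff ℝ 1 g) (α β : ℝ) (hαβ : α ≤ β) :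
    ∃ h : ℝ → ℝ, (∃ K : NNReal, LipschitzWith K h) ∧ (∃ M, ∀ x, |h x| ≤ M) ∧
      (∀ u ∈ Set.Icc α β, h u = g u) ∧ (∀ u, u ≤ α → h u = g α) ∧ (∀ u, β ≤ u → h u = g β) := by
  obtain ⟨K, hK⟩ := (hg.contDiffOn (s := Set.Icc α β)).exists_lipschitzOnWith one_ne_zero
    (convex_Icc α β) isCompact_Icc
  obtain ⟨M, hM⟩ := (isCompact_Icc (a := α) (b := β)).exists_bound_of_continuousOn
    hg.continuous.continuousOn
  refine ⟨fun u => g (Set.projIcc α β hαβ u), ⟨K * 1, ?_⟩, ⟨M, fun x => hM _ (Set.projIcc α β hαβ x).2⟩,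
    ?_, ?_, ?_⟩
  · have h1 := (LipschitzWith.subtype_val (Set.Icc α β)).comp (LipschitzWith.projIcc hαβ)
    rw [one_mul] at h1
    have h2 := hK.comp (h1.lipschitzOnWith (s := Set.univ))
      (fun x _ => (Set.projIcc α β hαβ x).2)
    exact lipschitzOnWith_univ.1 h2
  · intro u hu
    simp only [Set.projIcc_of_mem hαβ hu]
  · intro u hu
    simp only [Set.projIcc_of_le_left hαβ hu]
  · intro u hu
    simp only [Set.projIcc_of_right_le hαβ hu]

theorem energylt11 {h G : ℝ → ℝ} (hG : ∀ u, HasDerivAt G (h u) u) {a : ℝ} (ha : 0 < a)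
    {u v : ℝ → ℝ} (hs : IsSol11 h a u v) {up : ℝ} (hu : Tendsto u atTop (𝓝 up))
    (hv : Tendsto v atTop (𝓝 0)) (hne : ∀ y, 0 ≤ y → h (u y) ≠ 0) (y : ℝ) :
    v y ^ 2 / 2 - G (u y) < -G up := by
  have hE : Monotone (fun y => v y ^ 2 / 2 - G (u y)) :=
    mono11 (energy11 hG hs) (fun y => by positivity)
  have hlim : Tendsto (fun y => v y ^ 2 / 2 - G (u y)) atTop (𝓝 (0 ^ 2 / 2 - G up)) :=
    ((hv.pow 2).div_const 2).sub ((hG up).continuousAt.tendsto.comp hu)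
  have e0 : (0 : ℝ) ^ 2 / 2 - G up = -G up := by ring
  rw [e0] at hlim
  have hle : ∀ z, v z ^ 2 / 2 - G (u z) ≤ -G up := fun z => hE.ge_of_tendsto hlim z
  refine lt_of_le_of_ne (hle y) fun heq => ?_
  have hconst : ∀ z, y ≤ z → v z ^ 2 / 2 - G (u z) = -G up := fun z hz =>
    le_antisymm (hle z) (heq ▸ hE hz)
  have hv0 : ∀ z, y < z → v z = 0 := by
    intro z hz
    have h1 : HasDerivAt (fun y => v y ^ 2 / 2 - G (u y)) 0 z := by
      refine (hasDerivAt_const z (-G up)).congr_of_eventuallyEq ?_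
      filter_upwards [lt_mem_nhds hz] with x hx using hconst x hx.le
    have h2 := (energy11 hG hs z).unique h1
    have h3 : v z ^ 2 = 0 := by
      rcases mul_eq_zero.1 h2 with h | h
      · exact absurd h ha.ne'
      · exact h
    exact pow_eq_zero_iff two_ne_zero |>.1 h3
  have hz : y < max y 0 + 1 := by linarith [le_max_left y 0]
  have h1 : HasDerivAt v 0 (max y 0 + 1) := by
    refine (hasDerivAt_const _ (0:ℝ)).congr_of_eventuallyEq ?_
    filter_upwards [lt_mem_nhds hz] with x hx using hv0 x hx
  have h2 := (hs (max y 0 + 1)).2.unique h1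
  rw [hv0 _ hz] at h2
  exact hne (max y 0 + 1) (by linarith [le_max_right y 0]) (by linarith)

theorem limbot11 {V V' : ℝ → ℝ} (hV : ∀ y, HasDerivAt V (V' y) y) (h : ∀ y, y ≤ 0 → 0 ≤ V' y)
    (m : ℝ) (hm : ∀ y, y ≤ 0 → m ≤ V y) : ∃ l, Tendsto V atBot (𝓝 l) := by
  have hmono : MonotoneOn V (Set.Iic 0) := by
    apply monotoneOn_of_deriv_nonneg (convex_Iic _)
    · exact fun t _ => (hV t).continuousAt.continuousWithinAt
    · exact fun t _ => (hV t).differentiableAt.differentiableWithinAt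
    · intro t ht
      rw [(hV t).deriv]
      rw [interior_Iic] at ht
      exact h t (le_of_lt ht)
  have hm' : Monotone (fun y => V (min y 0)) := fun x y hxy =>
    hmono (Set.mem_Iic.2 (min_le_right _ _)) (Set.mem_Iic.2 (min_le_right _ _))
      (min_le_min_right 0 hxy)
  have hb : BddBelow (Set.range fun y => V (min y 0)) :=
    ⟨m, by rintro _ ⟨y, rfl⟩; exact hm _ (min_le_right _ _)⟩
  refine ⟨_, (tendsto_atBot_ciInf hm' hb).congr' ?_⟩
  filter_upwards [eventually_le_atBot 0] with y hy
  rw [min_eq_left hy]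

theorem lyap11 {V V' D D' : ℝ → ℝ} (hV : ∀ y, HasDerivAt V (V' y) y)
    (hD : ∀ y, HasDerivAt D (D' y) y) (κ C m : ℝ) (hκ : 0 < κ) (hC : 0 ≤ C)
    (h1 : ∀ y, y ≤ 0 → κ * D y ≤ V' y) (h2 : ∀ y, y ≤ 0 → -C * D y ≤ D' y)
    (hD0 : ∀ y, 0 ≤ D y) (hm : ∀ y, y ≤ 0 → m ≤ V y) : Tendsto D atBot (𝓝 0) := by
  obtain ⟨l, hl⟩ := limbot11 hV (fun y hy => (mul_nonneg hκ.le (hD0 y)).trans (h1 y hy)) m hm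
  have hW : ∀ y, HasDerivAt (fun y => D y + C / κ * V y) (D' y + C / κ * V' y) y :=
    fun y => (hD y).add ((hV y).const_mul _)
  have hCκ : 0 ≤ C / κ := by positivity
  obtain ⟨l', hl'⟩ := limbot11 hW (fun y hy => by
      have e1 := mul_le_mul_of_nonneg_left (h1 y hy) hCκ
      have e2 : C / κ * (κ * D y) = C * D y := by field_simp
      linarith [h2 y hy]) (C / κ * m) (fun y hy => by
      have e1 := mul_le_mul_of_nonneg_left (hm y hy) hCκ
      linarith [hD0 y])
  have hDl : Tendsto D atBot (𝓝 (l' - C / κ * l)) := by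
    refine (hl'.sub (hl.const_mul (C / κ))).congr fun y => ?_
    ring
  have hd0 : 0 ≤ l' - C / κ * l := ge_of_tendsto' hDl hD0
  have hex : ∀ y : ℝ, ∃ z, z < y ∧ V' z = V y - V (y - 1) := by
    intro y
    obtain ⟨z, hz, hz'⟩ := exists_hasDerivAt_eq_slope V V' (sub_one_lt y)
      (fun t _ => (hV t).continuousAt.continuousWithinAt) (fun t _ => hV t)
    exact ⟨z, hz.2, by rw [hz']; simp⟩
  choose z hz hz' using hex
  have h3 : Tendsto z atBot atBot := tendsto_atBot_mono (fun y => (hz y).le) tendsto_id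
  have h4 : Tendsto (fun y => V y - V (y - 1)) atBot (𝓝 (l - l)) :=
    hl.sub (hl.comp (tendsto_atBot_add_const_right _ (-1) tendsto_id))
  have h5 : Tendsto (fun y => κ * D (z y)) atBot (𝓝 (κ * (l' - C / κ * l))) :=
    (hDl.comp h3).const_mul κ
  have h6 : κ * (l' - C / κ * l) ≤ l - l := by
    refine le_of_tendsto_of_tendsto h5 h4 ?_
    filter_upwards [eventually_le_atBot 0] with y hy
    rw [← hz' y]
    exact h1 _ ((hz y).le.trans hy)
  have h7 : l' - C / κ * l = 0 := by
    rw [sub_self] at h6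
    by_contra hcon
    have : 0 < l' - C / κ * l := lt_of_le_of_ne hd0 (Ne.symm hcon)
    have := mul_pos hκ this
    linarith
  rwa [h7] at hDl

theorem nonmono11 {g : ℝ → ℝ} {a um : ℝ} {u v : ℝ → ℝ}
    (hs : IsSol11 g a u v) (hgd : DifferentiableAt ℝ g um) (hg0 : g um = 0)
    (hne : ∀ y, ¬ (u y = um ∧ v y = 0)) (hu : Tendsto u atBot (𝓝 um))
    (hosc : deriv g um < -a ^ 2 / 4) : ¬ Monotone u := by
  intro hmono
  have hge : ∀ y, um ≤ u y := fun y => hmono.le_of_tendsto hu y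
  have hgt : ∀ y, um < u y := by
    intro y
    refine lt_of_le_of_ne (hge y) fun heq => ?_
    have hconst : ∀ z, z ≤ y → u z = um := fun z hz => le_antisymm (heq ▸ hmono hz) (hge z)
    have h1 : HasDerivAt u 0 (y - 1) := by
      refine (hasDerivAt_const _ um).congr_of_eventuallyEq ?_
      filter_upwards [gt_mem_nhds (sub_one_lt y)] with x hx using hconst x hx.le
    exact hne (y - 1) ⟨hconst _ (by linarith), (hs (y - 1)).1.unique h1⟩
  set r : ℝ → ℝ := fun y => v y / (u y - um) with hr
  have hrd : ∀ y, HasDerivAt r (g (u y) / (u y - um) + a * r y - r y ^ 2) y := by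
    intro y
    have hw : u y - um ≠ 0 := (sub_pos.2 (hgt y)).ne'
    refine HasDerivAt.congr_deriv ((hs y).2.div ((hs y).1.sub_const um) hw) ?_
    simp only [hr]
    field_simp
  set d := (-a ^ 2 / 4 - deriv g um) / 2 with hd
  have hdpos : 0 < d := by rw [hd]; linarith
  have hslope : ∀ᶠ y in atBot, g (u y) / (u y - um) < deriv g um + d := by
    have h1 := (hasDerivAt_iff_tendsto_slope.1 hgd.hasDerivAt)
    have h2 : Tendsto u atBot (𝓝[≠] um) :=
      tendsto_nhdsWithin_iff.2 ⟨hu, Eventually.of_forall fun y => (hgt y).ne'⟩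
    have h3 := (h1.comp h2).eventually (gt_mem_nhds (show deriv g um < deriv g um + d by linarith))
    filter_upwards [h3] with y hy
    simpa [slope_def_field, hg0] using hy
  obtain ⟨Y, hY⟩ := eventually_atBot.1 hslope
  set m := min 1 d with hm
  have hmpos : 0 < m := lt_min one_pos hdpos
  have hφ : ∀ y, HasDerivAt (fun y => Real.arctan (r y - a / 2) + m * y)
      (1 / (1 + (r y - a / 2) ^ 2) * (g (u y) / (u y - um) + a * r y - r y ^ 2) + m * 1) y :=
    fun y => (((hrd y).sub_const (a / 2)).arctan).add ((hasDerivAt_id y).const_mul m)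
  have hanti : AntitoneOn (fun y => Real.arctan (r y - a / 2) + m * y) (Set.Iic Y) := by
    apply antitoneOn_of_deriv_nonpos (convex_Iic _)
    · exact fun t _ => (hφ t).continuousAt.continuousWithinAt
    · exact fun t _ => (hφ t).differentiableAt.differentiableWithinAt
    · intro y hy
      rw [(hφ y).deriv]
      rw [interior_Iic] at hy
      have h1 := hY y (le_of_lt hy)
      set X := r y - a / 2 with hX
      have hq : g (u y) / (u y - um) + a * r y - r y ^ 2 ≤ -(d + X ^ 2) := by
        have : a * r y - r y ^ 2 = a ^ 2 / 4 - X ^ 2 := by rw [hX]; ring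
        rw [hd] at h1 ⊢
        linarith
      have hp : 0 < 1 + X ^ 2 := by positivity
      have hb : m * (1 + X ^ 2) ≤ d + X ^ 2 := by
        have h3 : m ≤ 1 := min_le_left _ _
        have h4 : m ≤ d := min_le_right _ _
        nlinarith [sq_nonneg X]
      have : 1 / (1 + X ^ 2) * (g (u y) / (u y - um) + a * r y - r y ^ 2) ≤ -m := by
        rw [one_div, inv_mul_le_iff₀ hp]
        linarith
      linarith
  have hπ := Real.pi_pos
  have h1 := hanti (a := Y - (Real.pi + 1) / m) (b := Y) (by
    have : 0 < (Real.pi + 1) / m := by positivity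
    simp only [Set.mem_Iic]; linarith) (by simp) (by
    have : 0 < (Real.pi + 1) / m := by positivity
    linarith)
  simp only at h1
  have h2 := Real.arctan_lt_pi_div_two (r (Y - (Real.pi + 1) / m) - a / 2)
  have h3 := Real.neg_pi_div_two_lt_arctan (r Y - a / 2)
  have h4 : m * (Y - (Real.pi + 1) / m) = m * Y - (Real.pi + 1) := by field_simp
  linarith


theorem exist11 {g G : ℝ → ℝ} (hg : ContDiff ℝ 1 g) (hG : ∀ u, HasDerivAt G (g u) u)
    {a uL um up : ℝ} (ha : 0 < a) (hL : uL < um) (hmp : um < up) (hgm : g um = 0)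
    (hgp : g up = 0) (hpos : ∀ u, u < um → 0 < g u) (hneg : ∀ u, um < u → u < up → g u < 0)
    (hGL : G uL < G up) :
    ∃ u v : ℝ → ℝ, IsSol11 g a u v ∧ Tendsto u atTop (𝓝 up) ∧ Tendsto v atTop (𝓝 0) ∧
      (∀ y, uL < u y ∧ u y < up) ∧ (∀ y, 0 ≤ y → g (u y) ≠ 0) ∧
      (∀ y, ¬ (u y = um ∧ v y = 0)) := by
  set us := (um + up) / 2 with hus
  have hu1 : um < us := by rw [hus]; linarith
  have hu2 : us < up := by rw [hus]; linarith
  obtain ⟨h1, ⟨K1, hK1⟩, ⟨M1, hM1⟩, he1, hl1, hr1⟩ := clamp11 hg us up hu2.le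
  obtain ⟨u1, v1, hs1, hz1, hb1, ht1, htv1⟩ := shoot11 hK1 M1 hM1 a ha us up hu2
    (fun u hu => by
      rcases le_or_gt u us with h | h
      · rw [hl1 u h]; exact hneg us hu1 hu2
      · rw [he1 u ⟨h.le, hu.le⟩]; exact hneg u (hu1.trans h) hu)
    (fun u hu => by rw [hr1 u hu, hgp])
  have hLp : uL ≤ up := (hL.trans hmp).le
  obtain ⟨h2, ⟨K2, hK2⟩, ⟨M2, hM2⟩, he2, hl2, hr2⟩ := clamp11 hg uL up hLp
  obtain ⟨u, v, hu0, hv0, hs⟩ := global11 hK2 M2 hM2 a ha us (v1 0)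
  have heq : ∀ y, 0 ≤ y → u y = u1 y ∧ v y = v1 y := by
    intro b hb
    obtain ⟨K', hK'⟩ := lip11 hK2 a
    have := ODE_solution_unique (v := fun _ x => ((x.2, h2 x.1 + a * x.2) : ℝ × ℝ))
      (f := fun y => (u y, v y)) (g := fun y => (u1 y, v1 y)) (a := 0) (b := b)
      (fun _ => hK')
      (fun t _ => ((hs t).1.prodMk (hs t).2).continuousAt.continuousWithinAt)
      (fun t _ => ((hs t).1.prodMk (hs t).2).hasDerivWithinAt)
      (fun t _ => ((hs1 t).1.prodMk (hs1 t).2).continuousAt.continuousWithinAt)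
      (fun t ht => by
        have e : h2 (u1 t) = h1 (u1 t) := by
          have := hb1 t ht.1
          rw [he1 _ ⟨this.1, this.2.le⟩, he2 _ ⟨by linarith, this.2.le⟩]
        have := ((hs1 t).1.prodMk (hs1 t).2).hasDerivWithinAt (s := Set.Ici t)
        rw [← e] at this
        exact this)
      (by simp only [hu0, hv0, hz1])
    have h3 := this (Set.right_mem_Icc.2 hb)
    exact ⟨congrArg Prod.fst h3, congrArg Prod.snd h3⟩
  have htu : Tendsto u atTop (𝓝 up) := by
    refine ht1.congr' ?_
    filter_upwards [eventually_ge_atTop 0] with y hy using (heq y hy).1.symm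
  have htv : Tendsto v atTop (𝓝 0) := by
    refine htv1.congr' ?_
    filter_upwards [eventually_ge_atTop 0] with y hy using (heq y hy).2.symm
  have hgn : ∀ y, 0 ≤ y → g (u y) ≠ 0 := by
    intro y hy
    have := hb1 y hy
    rw [(heq y hy).1]
    exact (hneg _ (by linarith) this.2).ne
  have hhn : ∀ y, 0 ≤ y → h2 (u y) ≠ 0 := by
    intro y hy
    have h3 := hb1 y hy
    have h4 := hgn y hy
    rw [(heq y hy).1] at h4 ⊢
    rwa [he2 _ ⟨by linarith, h3.2.le⟩]
  obtain ⟨G2, hG2⟩ := prim11 hK2.continuous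
  have hE := energylt11 hG2 ha hs htu htv hhn
  have hGu : ∀ y, G2 up < G2 (u y) := fun y => by
    have := hE y
    have := sq_nonneg (v y)
    linarith
  have hdiff : G2 up - G2 uL = G up - G uL := by
    have := Convex.norm_image_sub_le_of_norm_hasDerivWithin_le (f := fun x => G2 x - G x)
      (f' := fun x => h2 x - g x) (C := 0)
      (s := Set.Icc uL up)
      (fun t _ => ((hG2 t).sub (hG t)).hasDerivWithinAt) (fun t ht => by simp [he2 t ht])
      (convex_Icc _ _) (x := uL) (y := up) (by simp [hLp]) (by simp [hLp])
    simp only [zero_mul, norm_le_zero_iff] at this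
    linarith
  have hb : ∀ y, uL < u y ∧ u y < up := by
    intro y
    constructor
    · by_contra hcon
      push Not at hcon
      have hm : MonotoneOn G2 (Set.Iic uL) := by
        apply monotoneOn_of_deriv_nonneg (convex_Iic _)
        · exact fun t _ => (hG2 t).continuousAt.continuousWithinAt
        · exact fun t _ => (hG2 t).differentiableAt.differentiableWithinAt
        · intro t ht
          rw [(hG2 t).deriv]
          rw [interior_Iic] at ht
          rw [hl2 t (le_of_lt ht)]
          exact (hpos uL hL).le
      have := hm (a := u y) (b := uL) hcon (by simp) hcon
      have := hGu y
      linarith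
    · by_contra hcon
      push Not at hcon
      have := Convex.norm_image_sub_le_of_norm_hasDerivWithin_le (f := G2) (C := 0) (s := Set.Ici up)
        (fun t _ => (hG2 t).hasDerivWithinAt) (fun t ht => by simp [hr2 t ht, hgp])
        (convex_Ici _) (x := up) (y := u y) (by simp) hcon
      simp only [zero_mul, norm_le_zero_iff] at this
      have := hGu y
      linarith
  refine ⟨u, v, fun y => ⟨(hs y).1, ?_⟩, htu, htv, hb, hgn, ?_⟩
  · rw [← he2 (u y) ⟨(hb y).1.le, (hb y).2.le⟩]
    exact (hs y).2
  · rintro y ⟨hy1, hy2⟩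
    have hc := equil11 hK2 hs y (by rw [hy1, he2 um ⟨hL.le, hmp.le⟩, hgm]) hy2
    have : Tendsto u atTop (𝓝 um) := by
      refine tendsto_const_nhds.congr fun z => ?_
      rw [hc z, hy1]
    exact hmp.ne (tendsto_nhds_unique this htu)

theorem decay11 {g G : ℝ → ℝ} (hg : ContDiff ℝ 1 g) (hG : ∀ u, HasDerivAt G (g u) u)
    {a uL um up : ℝ} (ha : 0 < a) (hmp : um < up) (hgm : g um = 0)
    (hpos : ∀ u, u < um → 0 < g u) (hneg : ∀ u, um < u → u < up → g u < 0)
    (hd : deriv g um < 0) {u v : ℝ → ℝ} (hs : IsSol11 g a u v)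
    (hb : ∀ y, uL < u y ∧ u y < up) (hE : ∀ y, v y ^ 2 / 2 - G (u y) < -G up) :
    Tendsto u atBot (𝓝 um) ∧ Tendsto v atBot (𝓝 0) := by
  have hGc : Continuous G := continuous_iff_continuousAt.2 fun x => (hG x).continuousAt
  have hEm : Monotone (fun y => v y ^ 2 / 2 - G (u y)) :=
    mono11 (energy11 hG hs) (fun y => by positivity)
  obtain ⟨β, hβ, hub⟩ : ∃ β, β < up ∧ ∀ y, y ≤ 0 → u y ≤ β := by
    have h1 : ∀ᶠ x in 𝓝 up, G x < -(v 0 ^ 2 / 2 - G (u 0)) :=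
      hGc.continuousAt.eventually (gt_mem_nhds (by linarith [hE 0]))
    obtain ⟨l, hl, hl'⟩ := exists_Ioc_subset_of_mem_nhds h1 ⟨up - 1, by linarith⟩
    refine ⟨l, hl, fun y hy => ?_⟩
    by_contra hcon
    push Not at hcon
    have h2 : G (u y) < -(v 0 ^ 2 / 2 - G (u 0)) := hl' ⟨hcon, (hb y).2.le⟩
    have h3 : v y ^ 2 / 2 - G (u y) ≤ v 0 ^ 2 / 2 - G (u 0) := hEm hy
    have := sq_nonneg (v y)
    linarith
  have hφc : Continuous (dslope g um) := by
    rw [← continuousOn_univ]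
    exact (continuousOn_dslope univ_mem).2 ⟨hg.continuous.continuousOn,
      (hg.differentiable one_ne_zero) um⟩
  have hφg : ∀ x, g x = (x - um) * dslope g um x := by
    intro x
    have := sub_smul_dslope g um x
    rw [hgm, sub_zero, smul_eq_mul] at this
    exact this.symm
  have hφneg : ∀ x, x < up → dslope g um x < 0 := by
    intro x hx
    rcases lt_trichotomy x um with h | h | h
    · have h1 := hpos x h
      rw [hφg x] at h1
      by_contra hc
      push Not at hc
      nlinarith
    · rw [h, dslope_same]; exact hd
    · have h1 := hneg x h hx
      rw [hφg x] at h1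
      by_contra hc
      push Not at hc
      nlinarith
  have hK : IsCompact (Set.Icc uL β) := isCompact_Icc
  have hKne : (Set.Icc uL β).Nonempty := ⟨u 0, (hb 0).1.le, hub 0 le_rfl⟩
  obtain ⟨x0, hx0, hmax⟩ := hK.exists_isMaxOn hKne hφc.continuousOn
  obtain ⟨x1, hx1, hmin⟩ := hK.exists_isMinOn hKne hφc.continuousOn
  set c := -dslope g um x0 with hc
  set Cg := -dslope g um x1 with hCg
  have hcpos : 0 < c := by
    have := hφneg x0 (hx0.2.trans_lt hβ); rw [hc]; linarith
  have hCpos : 0 < Cg := by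
    have := hφneg x1 (hx1.2.trans_lt hβ); rw [hCg]; linarith
  obtain ⟨B, hB⟩ := (isCompact_Icc (a := uL) (b := up)).exists_bound_of_continuousOn hGc.continuousOn
  set R := |uL - um| + |up - um| with hR
  set ε := min (a / 2) (c / (2 * a)) with hε
  have hεpos : 0 < ε := lt_min (by positivity) (by positivity)
  have hε1 : ε ≤ a / 2 := min_le_left _ _
  have hε2 : ε * a ≤ c / 2 := by
    have : ε ≤ c / (2 * a) := min_le_right _ _
    calc ε * a ≤ c / (2 * a) * a := mul_le_mul_of_nonneg_right this ha.le
      _ = c / 2 := by field_simp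
  set κ := min (a / 4) (ε * c / 2) with hκ
  have hκpos : 0 < κ := lt_min (by positivity) (by positivity)
  have hκ1 : κ ≤ a / 4 := min_le_left _ _
  have hκ2 : κ ≤ ε * c / 2 := min_le_right _ _
  have hw : ∀ y, HasDerivAt (fun y => u y - um) (v y) y := fun y => (hs y).1.sub_const um
  have hV : ∀ y, HasDerivAt (fun y => (v y ^ 2 / 2 - G (u y)) - ε * ((u y - um) * v y))
      (a * v y ^ 2 - ε * (v y * v y + (u y - um) * (g (u y) + a * v y))) y :=
    fun y => (energy11 hG hs y).sub (((hw y).mul (hs y).2).const_mul ε)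
  have hD : ∀ y, HasDerivAt (fun y => v y ^ 2 + (u y - um) ^ 2)
      (2 * v y * (g (u y) + a * v y) + 2 * (u y - um) * v y) y := by
    intro y
    refine HasDerivAt.congr_deriv (((hs y).2.pow 2).add ((hw y).pow 2)) ?_
    simp
  have hlim : Tendsto (fun y => v y ^ 2 + (u y - um) ^ 2) atBot (𝓝 0) := by
    refine lyap11 hV hD κ (Cg + 1) (-B - ε ^ 2 * R ^ 2 / 2) hκpos (by positivity) ?_ ?_ ?_ ?_
    · intro y hy
      have h1 : dslope g um (u y) ≤ -c := by
        rw [hc, neg_neg]; exact hmax ⟨(hb y).1.le, hub y hy⟩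
      rw [hφg (u y)]
      set w := u y - um
      set q := dslope g um (u y)
      set z := v y
      have e1 : ε * c * w ^ 2 ≤ -(ε * (w * (w * q))) := by
        have : 0 ≤ ε * w ^ 2 * (-c - q) := by
          have : 0 ≤ -c - q := by linarith
          positivity
        nlinarith
      have e2 : ε * a * (w * z) ≤ a / 4 * z ^ 2 + ε * c / 2 * w ^ 2 := by
        have h3 : ε * a * (w * z) ≤ a / 4 * z ^ 2 + ε ^ 2 * a * w ^ 2 := by
          nlinarith [mul_nonneg ha.le (sq_nonneg (z / 2 - ε * w))]
        have h4 : ε ^ 2 * a * w ^ 2 ≤ ε * c / 2 * w ^ 2 := by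
          have := mul_le_mul_of_nonneg_left hε2 (mul_nonneg hεpos.le (sq_nonneg w))
          nlinarith
        linarith
      have e3 : κ * z ^ 2 ≤ a / 4 * z ^ 2 := mul_le_mul_of_nonneg_right hκ1 (sq_nonneg z)
      have e4 : κ * w ^ 2 ≤ ε * c / 2 * w ^ 2 := mul_le_mul_of_nonneg_right hκ2 (sq_nonneg w)
      have e5 : ε * z ^ 2 ≤ a / 2 * z ^ 2 := mul_le_mul_of_nonneg_right hε1 (sq_nonneg z)
      nlinarith
    · intro y hy
      have h1 : dslope g um x1 ≤ dslope g um (u y) := hmin ⟨(hb y).1.le, hub y hy⟩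
      have h2 := hφneg (u y) (hb y).2
      rw [hφg (u y)]
      set w := u y - um
      set q := dslope g um (u y)
      set z := v y
      have hq : -Cg ≤ q := by rw [hCg]; linarith
      have e0 : 0 ≤ a * z ^ 2 := by positivity
      have e1 : 0 ≤ (Cg + q) * (z ^ 2 + w ^ 2) := mul_nonneg (by linarith) (by positivity)
      have e2 : 0 ≤ (-q) * (z - w) ^ 2 := mul_nonneg (by linarith) (by positivity)
      have e3 : 0 ≤ (z + w) ^ 2 := by positivity
      nlinarith
    · intro y; positivity
    · intro y hy
      have h1 : G (u y) ≤ B := (le_abs_self _).trans (hB (u y) ⟨(hb y).1.le, (hb y).2.le⟩)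
      have h2 : |u y - um| ≤ R := by
        rw [hR]
        apply abs_le.2
        constructor
        · linarith [(hb y).1, neg_abs_le (uL - um), abs_nonneg (up - um)]
        · linarith [(hb y).2, le_abs_self (up - um), abs_nonneg (uL - um)]
      have h3 : (u y - um) ^ 2 ≤ R ^ 2 := sq_le_sq' (by linarith [(abs_le.1 h2).1]) (abs_le.1 h2).2
      have h4 : ε ^ 2 * (u y - um) ^ 2 ≤ ε ^ 2 * R ^ 2 :=
        mul_le_mul_of_nonneg_left h3 (by positivity)
      nlinarith [sq_nonneg (v y - ε * (u y - um))]
  have hv2 : Tendsto (fun y => v y ^ 2) atBot (𝓝 0) :=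
    squeeze_zero (fun y => sq_nonneg _) (fun y => by linarith [sq_nonneg (u y - um)]) hlim
  have hw2 : Tendsto (fun y => (u y - um) ^ 2) atBot (𝓝 0) :=
    squeeze_zero (fun y => sq_nonneg _) (fun y => by linarith [sq_nonneg (v y)]) hlim
  have key : ∀ x : ℝ → ℝ, Tendsto (fun y => x y ^ 2) atBot (𝓝 0) → Tendsto x atBot (𝓝 0) := by
    intro x hx
    have := hx.sqrt
    simp only [Real.sqrt_sq_eq_abs, Real.sqrt_zero] at this
    exact (tendsto_zero_iff_abs_tendsto_zero x).2 this
  refine ⟨?_, key v hv2⟩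
  have := (key _ hw2).add_const um
  simpa using this

theorem main11 {g G : ℝ → ℝ} (hg : ContDiff ℝ 1 g) (hG : ∀ u, HasDerivAt G (g u) u)
    {a uL um up : ℝ} (ha : 0 < a) (hL : uL < um) (hmp : um < up) (hgm : g um = 0)
    (hgp : g up = 0) (hpos : ∀ u, u < um → 0 < g u) (hneg : ∀ u, um < u → u < up → g u < 0)
    (hGL : G uL < G up) (hd : deriv g um < 0) :
    ∃ u v : ℝ → ℝ, IsSol11 g a u v ∧ Tendsto u atBot (𝓝 um) ∧ Tendsto v atBot (𝓝 0) ∧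
      Tendsto u atTop (𝓝 up) ∧ Tendsto v atTop (𝓝 0) ∧
      (deriv g um < -a ^ 2 / 4 → ¬ Monotone u) := by
  obtain ⟨u, v, hs, htu, htv, hb, hgn, hne⟩ := exist11 hg hG ha hL hmp hgm hgp hpos hneg hGL
  have hE := energylt11 hG ha hs htu htv hgn
  obtain ⟨h1, h2⟩ := decay11 hg hG ha hmp hgm hpos hneg hd hs hb hE
  exact ⟨u, v, hs, h1, h2, htu, htv, fun hosc =>
    nonmono11 hs ((hg.differentiable one_ne_zero) um) hgm hne h1 hosc⟩


theorem left11 {g G : ℝ → ℝ} (hG : ∀ u, HasDerivAt G (g u) u) {c um b : ℝ} (hc : 0 < c)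
    (h : ∀ᶠ u in atBot, c ≤ g u) : ∃ uL, uL < um ∧ G uL < b := by
  obtain ⟨u0, hu0⟩ := eventually_atBot.1 h
  have hmv : ∀ u, u ≤ u0 → c * (u0 - u) ≤ G u0 - G u := by
    intro u hu
    refine (convex_Iic u0).mul_sub_le_image_sub_of_le_deriv
      (fun t _ => (hG t).continuousAt.continuousWithinAt)
      (fun t _ => (hG t).differentiableAt.differentiableWithinAt) ?_ u hu u0 (by simp) hu
    intro t ht
    rw [(hG t).deriv]
    rw [interior_Iic] at ht
    exact hu0 t (le_of_lt ht)
  set d := (|G u0 - b| + 1) / c with hd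
  have hdpos : 0 < d := by positivity
  refine ⟨min (u0 - d) (um - 1), ?_, ?_⟩
  · linarith [min_le_right (u0 - d) (um - 1)]
  · set z := min (u0 - d) (um - 1) with hz
    have h1 : z ≤ u0 - d := min_le_left _ _
    have h2 := hmv z (by linarith)
    have h3 : c * d ≤ c * (u0 - z) := mul_le_mul_of_nonneg_left (by linarith) hc.le
    have h4 : c * d = |G u0 - b| + 1 := by rw [hd]; field_simp
    linarith [le_abs_self (G u0 - b)]


/-- global existence of (possibly oscillatory) traveling wave profiles for
negative speed `s < 0`: if `F̃₁(ξ) = F(ξ) − (sμξ/k)² − F(P⁺)` is nonpositive on `(0, P⁻)`,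
then there is a heteroclinic of `P' = (2/k²)Q̃`, `Q̃' = f(P) − (2μs/k²)Q̃ + (2/k²)Q̃²/P` from
`(P⁻,0)` to `(P⁺,0)`; if in addition `−sμ/k < √(−2f'(P⁻))`, the profile is non-monotone. -/
theorem stmt_11 (γ s μ k Pp Pm C₁ C₂ : ℝ) (hγ : 1 ≤ γ) (hs : s < 0) (hμ : 0 < μ) (hk : 0 < k)
    (hPm : 0 < Pm) (hPmPp : Pm < Pp)
    (hC₁ : C₁ = (Pp ^ (γ + 1) - Pm ^ (γ + 1)) / (Pp - Pm))
    (hC₂ : C₂ = Pp * Pm * ((Pp ^ γ - Pm ^ γ) / (Pp - Pm)))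
    (f F : ℝ → ℝ)
    (hf : ∀ P : ℝ, f P = P ^ γ - C₁ + C₂ / P)
    (hroot1 : f Pm = 0) (hroot2 : f Pp = 0)
    (hF : ∀ P : ℝ, F P = P ^ (γ + 1) / (γ + 1) - C₁ * P + C₂ * Real.log P)
    (hF₁ : ∀ ξ : ℝ, 0 < ξ → ξ < Pm → F ξ - (s * μ * ξ / k) ^ 2 - F Pp ≤ 0) :
    ∃ P Q : ℝ → ℝ,
      (∀ y : ℝ, 0 < P y) ∧
      (∀ y : ℝ, HasDerivAt P (2 / k ^ 2 * Q y) y) ∧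
      (∀ y : ℝ, HasDerivAt Q
        (f (P y) - 2 * μ * s / k ^ 2 * Q y + 2 / k ^ 2 * (Q y) ^ 2 / P y) y) ∧
      Tendsto (fun y => (P y, Q y)) atBot (𝓝 (Pm, 0)) ∧
      Tendsto (fun y => (P y, Q y)) atTop (𝓝 (Pp, 0)) ∧
      (-(s * μ) / k < Real.sqrt (-2 * deriv f Pm) → ¬ Monotone P ∧ ¬ Antitone P) := by
  have hPp : 0 < Pp := hPm.trans hPmPp
  set q : ℝ → ℝ := fun P => P ^ (γ + 1) - C₁ * P + C₂ with hq
  have hqf : ∀ P, 0 < P → f P = q P / P := by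
    intro P hP
    rw [hf, hq]
    simp only
    rw [Real.rpow_add_one hP.ne']
    field_simp
  have hqm : q Pm = 0 := by
    have := hqf Pm hPm
    rw [hroot1] at this
    field_simp at this
    linarith
  have hqp : q Pp = 0 := by
    have := hqf Pp hPp
    rw [hroot2] at this
    field_simp at this
    linarith
  have hconv : StrictConvexOn ℝ (Set.Ici 0) q := by
    have h1 : StrictConvexOn ℝ (Set.Ici 0) (fun x : ℝ => x ^ (γ + 1)) :=
      strictConvexOn_rpow (by linarith)
    have h2 : ConvexOn ℝ (Set.Ici (0:ℝ)) (fun x : ℝ => -C₁ * x + C₂) := by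
      refine ⟨convex_Ici 0, fun x _ y _ s t _ _ hst => ?_⟩
      simp only [smul_eq_mul]
      have : t = 1 - s := by linarith
      subst this
      apply le_of_eq; ring
    have h3 := h1.add_convexOn h2
    refine h3.congr fun x _ => ?_
    simp only [hq, Pi.add_apply]; ring
  have hqpos : ∀ x, 0 ≤ x → x < Pm → 0 < q x := by
    intro x hx hxm
    have := hconv.slope_strict_mono_adjacent (x := x) (y := Pm) (z := Pp) hx hPp.le hxm hPmPp
    rw [hqm, hqp, sub_self, zero_div, zero_sub, neg_div, neg_lt_zero] at this
    exact (div_pos_iff_of_pos_right (by linarith)).1 this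
  have hqneg : ∀ x, Pm < x → x < Pp → q x < 0 := by
    intro x hx hxm
    have := hconv.slope_strict_mono_adjacent (x := Pm) (y := x) (z := Pp) hPm.le hPp.le hx hxm
    rw [hqm, hqp, sub_zero, zero_sub] at this
    by_contra hcon
    push Not at hcon
    have h1 : 0 ≤ q x / (x - Pm) := div_nonneg hcon (by linarith)
    have h2 : -q x / (Pp - x) ≤ 0 := div_nonpos_of_nonpos_of_nonneg (by linarith) (by linarith)
    linarith
  have hC2 : 0 < C₂ := by
    have := hqpos 0 le_rfl hPm
    simp only [hq] at this
    rw [Real.zero_rpow (by linarith)] at this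
    linarith
  set q' := (γ + 1) * Pm ^ γ - C₁ with hq'
  have hqd : HasDerivAt q q' Pm := by
    have h1 := Real.hasDerivAt_rpow_const (x := Pm) (p := γ + 1) (Or.inl hPm.ne')
    rw [add_sub_cancel_right] at h1
    have h2 := ((h1.sub ((hasDerivAt_id Pm).const_mul C₁)).add_const C₂)
    refine h2.congr_deriv ?_
    rw [hq', mul_one]
  have hq'neg : q' < 0 := by
    have h1 := hconv.lt_slope_of_hasDerivAt (x := Pm) (y := Pp) hPm.le hPp.le hPmPp hqd
    rw [slope_def_field, hqm, hqp] at h1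
    simpa using h1
  have hfd : HasDerivAt f (q' / Pm) Pm := by
    have h1 := hqd.div (hasDerivAt_id Pm) hPm.ne'
    have h2 : HasDerivAt f _ Pm := h1.congr_of_eventuallyEq (by
      filter_upwards [lt_mem_nhds hPm] with x hx
      exact hqf x hx)
    refine h2.congr_deriv ?_
    rw [hqm]
    simp only [id]
    field_simp
    ring
  have hk2 : 0 < 2 / k ^ 2 := by positivity
  set g : ℝ → ℝ := fun u => 2 / k ^ 2 * (Real.exp ((γ - 1) * u) - C₁ * Real.exp (-u)
    + C₂ * Real.exp (-2 * u)) with hg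
  have hgC : ContDiff ℝ 1 g := by
    rw [hg]; fun_prop
  have hgf : ∀ u, g u = 2 / k ^ 2 * (f (Real.exp u) * Real.exp (-u)) := by
    intro u
    rw [hf, hg]
    simp only
    have e1 : Real.exp ((γ - 1) * u) = Real.exp (u * γ) * Real.exp (-u) := by
      rw [← Real.exp_add]; ring_nf
    have e2 : Real.exp (-2 * u) = Real.exp (-u) * Real.exp (-u) := by
      rw [← Real.exp_add]; ring_nf
    rw [← Real.exp_mul, div_eq_mul_inv C₂, ← Real.exp_neg, e1, e2]
    ring
  have hgq : ∀ u, g u = 2 / k ^ 2 * (q (Real.exp u) * (Real.exp (-u)) ^ 2) := by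
    intro u
    rw [hgf, hqf _ (Real.exp_pos u), Real.exp_neg]
    ring
  obtain ⟨G, hG⟩ := prim11 hgC.continuous
  set um := Real.log Pm with hum
  set up := Real.log Pp with hup
  have eum : Real.exp um = Pm := Real.exp_log hPm
  have eup : Real.exp up = Pp := Real.exp_log hPp
  have hmp : um < up := Real.log_lt_log hPm hPmPp
  have hgm : g um = 0 := by rw [hgf, eum, hroot1]; ring
  have hgp : g up = 0 := by rw [hgf, eup, hroot2]; ring
  have hgpos : ∀ u, u < um → 0 < g u := by
    intro u hu
    rw [hgq]
    have := hqpos (Real.exp u) (Real.exp_pos u).le (by rw [← eum]; exact Real.exp_lt_exp.2 hu)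
    have := Real.exp_pos (-u)
    positivity
  have hgneg : ∀ u, um < u → u < up → g u < 0 := by
    intro u hu hu'
    rw [hgq]
    have h1 := hqneg (Real.exp u) (by rw [← eum]; exact Real.exp_lt_exp.2 hu)
      (by rw [← eup]; exact Real.exp_lt_exp.2 hu')
    have := Real.exp_pos (-u)
    exact mul_neg_of_pos_of_neg hk2 (mul_neg_of_neg_of_pos h1 (by positivity))
  have hgd : HasDerivAt g (2 / k ^ 2 * (q' / Pm)) um := by
    have h1 : HasDerivAt (fun u => f (Real.exp u)) (q' / Pm * Real.exp um) um := by
      have h0 := hfd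
      rw [← eum] at h0
      have h2 := h0.comp um (Real.hasDerivAt_exp um)
      rw [eum] at h2 ⊢
      exact h2
    have h2 : HasDerivAt (fun u => Real.exp (-u)) (Real.exp (-um) * (-1)) um :=
      (hasDerivAt_neg um).exp
    have h3 := (h1.mul h2).const_mul (2 / k ^ 2)
    have h4 : g = fun u => 2 / k ^ 2 * (f (Real.exp u) * Real.exp (-u)) := funext hgf
    rw [h4]
    refine h3.congr_deriv ?_
    rw [eum, hroot1, Real.exp_neg, eum]
    field_simp
    ring
  have hgd0 : deriv g um < 0 := by
    rw [hgd.deriv]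
    exact mul_neg_of_pos_of_neg hk2 (div_neg_of_neg_of_pos hq'neg hPm)
  obtain ⟨uL, hL, hGL⟩ := left11 (um := um) (b := G up) hG hk2 (by
    have h1 : Tendsto (fun u : ℝ => Real.exp (-u)) atBot atTop :=
      Real.tendsto_exp_atTop.comp tendsto_neg_atBot_atTop
    filter_upwards [h1.eventually_ge_atTop 1, h1.eventually_ge_atTop ((C₁ + 1) / C₂)] with u e1 e2
    rw [div_le_iff₀ hC2] at e2
    have e3 : Real.exp (-2 * u) = Real.exp (-u) * Real.exp (-u) := by
      rw [← Real.exp_add]; ring_nf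
    have e4 := Real.exp_pos ((γ - 1) * u)
    have e5 : 1 ≤ Real.exp ((γ - 1) * u) - C₁ * Real.exp (-u) + C₂ * Real.exp (-2 * u) := by
      rw [e3]
      nlinarith
    simp only [hg]
    exact le_mul_of_one_le_right hk2.le e5)
  set a := -2 * μ * s / k ^ 2 with ha
  have hapos : 0 < a := by
    rw [ha]
    have : 0 < μ * (-s) := mul_pos hμ (by linarith)
    apply div_pos (by linarith) (by positivity)
  obtain ⟨u, v, hsol, hu1, hv1, hu2, hv2, hnm⟩ :=
    main11 hgC hG hapos hL hmp hgm hgp hgpos hgneg hGL hgd0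
  have hPlimB : Tendsto (fun y => Real.exp (u y)) atBot (𝓝 Pm) := by
    rw [← eum]; exact (Real.continuous_exp.tendsto um).comp hu1
  have hPlimT : Tendsto (fun y => Real.exp (u y)) atTop (𝓝 Pp) := by
    rw [← eup]; exact (Real.continuous_exp.tendsto up).comp hu2
  refine ⟨fun y => Real.exp (u y), fun y => k ^ 2 / 2 * (Real.exp (u y) * v y),
    fun y => Real.exp_pos _, ?_, ?_, ?_, ?_, ?_⟩
  · intro y
    refine (hsol y).1.exp.congr_deriv ?_
    field_simp
  · intro y
    refine (((hsol y).1.exp.mul (hsol y).2).const_mul (k ^ 2 / 2)).congr_deriv ?_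
    rw [hgf, Real.exp_neg, ha]
    have := Real.exp_pos (u y)
    field_simp
    ring
  · have h1 := (hPlimB.mul hv1).const_mul (k ^ 2 / 2)
    rw [mul_zero, mul_zero] at h1
    exact hPlimB.prodMk_nhds h1
  · have h1 := (hPlimT.mul hv2).const_mul (k ^ 2 / 2)
    rw [mul_zero, mul_zero] at h1
    exact hPlimT.prodMk_nhds h1
  · intro hosc
    constructor
    · intro hmono
      refine hnm ?_ (fun x y hxy => Real.exp_le_exp.1 (hmono hxy))
      have h0 : 0 ≤ -(s * μ) / k := by
        apply div_nonneg _ hk.le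
        nlinarith
      have h1 := (Real.lt_sqrt h0).1 hosc
      rw [hfd.deriv] at h1
      rw [hgd.deriv]
      have h2 : -a ^ 2 / 4 = -(1 / k ^ 2 * (-(s * μ) / k) ^ 2) := by
        rw [ha]; field_simp; ring
      have h3 := mul_lt_mul_of_pos_left h1 (show 0 < 1 / k ^ 2 by positivity)
      rw [h2]
      have h4 : 2 / k ^ 2 * (q' / Pm) = -(1 / k ^ 2 * (-2 * (q' / Pm))) := by ring
      linarith
    · intro hanti
      have h1 := hanti.le_of_tendsto hPlimT 0
      have h2 := hanti.ge_of_tendsto hPlimB 0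
      linarith
end

section
/- Let γ ≥ 1, s ∈ ℝ, μ, k > 0, A ∈ ℝ, let P : ℝ → (0,∞) be a smooth function and J = sP − A. Define f₁ = J²/P² − γP^{γ−1}, f₄ = k²·P'(√P)'/P^{3/2}, f₅ = 2k²(√P)'/√P, and assume the constants M₁ = sup_ℝ f₁², M₂ = sup_ℝ (f₁')², M₃ = sup_ℝ |(J/P)'|, M₄ = sup_ℝ f₄², M₅ = sup_ℝ f₅² are all finite. Suppose λ ∈ ℂ and ρ̃, J̃ : ℝ → ℂ are Schwartz functions, not both identically zero, satisfying λρ̃ = sρ̃' − J̃' and λJ̃ = sJ̃' + (f₁ρ̃)' − ((2J/P)·J̃)' + μJ̃'' + (k²/2)ρ̃''' − 2k²((√P)'·(ρ̃/√P)')'. Then for all ε₁, ε₂, ε₃ > 0 with ε₁/2 + ε₃/2 < μ, one has Re λ ≤ max(C₁, C₂, 2C₃/k²), where C₁ = 1/(2ε₁) + M₂/ε₂ + M₄/ε₃, C₂ = ε₂/2 + M₃, and C₃ = M₁/ε₂ + M₅/ε₃. -/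
/-- Pointwise energy inequality. -/
lemma aux_point (s μ k e1 e2 e3 M1 M2 M3 M4 M5 f1 f1d q qd f4 f5 : ℝ)
    (lam r0 r1 r2 r3 j0 j1 j2 h h1 : ℂ)
    (he1 : 0 < e1) (he2 : 0 < e2) (he3 : 0 < e3) (hμ : e1 / 2 + e3 / 2 < μ)
    (h1M : f1 ^ 2 ≤ M1) (h2M : f1d ^ 2 ≤ M2) (h3M : |qd| ≤ M3) (h4M : f4 ^ 2 ≤ M4)
    (h5M : f5 ^ 2 ≤ M5)
    (E1 : lam * r0 = s * r1 - j1)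
    (E2 : lam * j0 = s * j1 + (f1d * r0 + f1 * r1) - ((2 * qd : ℝ) * j0 + (2 * q : ℝ) * j1)
      + μ * j2 + (k ^ 2 / 2 : ℝ) * r3 - h1)
    (Hh : h = f5 * r1 - f4 * r0) (B' : ℝ)
    (hB : B' = s / 2 * (2 * (inner ℝ r0 r1)) + s / 2 * (2 * inner ℝ j0 j1)
      - (qd * inner ℝ j0 j0 + q * (2 * inner ℝ j0 j1))
      + μ * (inner ℝ j0 j2 + inner ℝ j1 j1)
      + k ^ 2 / 2 * ((inner ℝ j0 r3 + inner ℝ j1 r2) - s / 2 * (2 * inner ℝ r1 r2)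
        + (inner ℝ (lam * r0) r2 + inner ℝ (lam * r1) r1))
      - (inner ℝ j0 h1 + inner ℝ j1 h)) :
    (lam.re - (1 / (2 * e1) + M2 / e2 + M4 / e3)) * inner ℝ r0 r0
      + (lam.re - (e2 / 2 + M3)) * inner ℝ j0 j0
      + (lam.re * (k ^ 2 / 2) - (M1 / e2 + M5 / e3)) * inner ℝ r1 r1 ≤ B' := by
  have y (e a b : ℝ) (he : 0 < e) : a * b ≤ e / 2 * b ^ 2 + a ^ 2 / (2 * e) := by
    have : e / 2 * b ^ 2 + a ^ 2 / (2 * e) - a * b = (e * b - a) ^ 2 / (2 * e) := by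
      field_simp; ring
    have : 0 ≤ (e * b - a) ^ 2 / (2 * e) := by positivity
    linarith
  have y2 (e f g M N a b c : ℝ) (he : 0 < e) (hf : f ^ 2 ≤ M) (hg : g ^ 2 ≤ N) :
      (f * a + g * b) * c ≤ e / 2 * c ^ 2 + M / e * a ^ 2 + N / e * b ^ 2 := by
    have h1 := y e (f * a + g * b) c he
    have h2 : (f * a + g * b) ^ 2 / (2 * e) ≤ (M * a ^ 2 + N * b ^ 2) / e := by
      rw [div_le_div_iff₀ (by positivity) he]
      have := mul_le_mul_of_nonneg_right hf (sq_nonneg a)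
      have := mul_le_mul_of_nonneg_right hg (sq_nonneg b)
      have : (f * a + g * b) ^ 2 ≤ 2 * (M * a ^ 2 + N * b ^ 2) := by
        nlinarith [sq_nonneg (f * a - g * b)]
      nlinarith
    have h3 : (M * a ^ 2 + N * b ^ 2) / e = M / e * a ^ 2 + N / e * b ^ 2 := by ring
    linarith
  have hj1 : j1 = s * r1 - lam * r0 := by rw [E1]; ring
  have E1r := congrArg Complex.re E1
  have E1i := congrArg Complex.im E1
  have E2r := congrArg Complex.re E2
  have E2i := congrArg Complex.im E2
  have Hhr := congrArg Complex.re Hh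
  have Hhi := congrArg Complex.im Hh
  simp only [Complex.inner, Complex.mul_re, Complex.mul_im, Complex.add_re, Complex.add_im,
    Complex.sub_re, Complex.sub_im, Complex.ofReal_re, Complex.ofReal_im, Complex.conj_re,
    Complex.conj_im, zero_mul, sub_zero, add_zero] at *
  have a1 := y e1 (-r0.re) j1.re he1
  have a2 := y e1 (-r0.im) j1.im he1
  have b1 := y2 e2 f1d f1 M2 M1 r0.re r1.re j0.re he2 h2M h1M
  have b2 := y2 e2 f1d f1 M2 M1 r0.im r1.im j0.im he2 h2M h1M
  have c1 := y2 e3 f5 (-f4) M5 M4 r1.re r0.re j1.re he3 h5M (by simpa using h4M)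
  have c2 := y2 e3 f5 (-f4) M5 M4 r1.im r0.im j1.im he3 h5M (by simpa using h4M)
  have d1 : -qd * (j0.re ^ 2 + j0.im ^ 2) ≤ M3 * (j0.re ^ 2 + j0.im ^ 2) :=
    mul_le_mul_of_nonneg_right ((neg_le_abs _).trans h3M) (by positivity)
  have d2 : (e1 / 2 + e3 / 2) * (j1.re ^ 2 + j1.im ^ 2) ≤ μ * (j1.re ^ 2 + j1.im ^ 2) :=
    mul_le_mul_of_nonneg_right hμ.le (by positivity)
  have hq : -r0.re * j1.re + -r0.im * j1.im
      + ((f1d * r0.re + f1 * r1.re) * j0.re + (f1d * r0.im + f1 * r1.im) * j0.im)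
      + ((f5 * r1.re + -f4 * r0.re) * j1.re + (f5 * r1.im + -f4 * r0.im) * j1.im)
      - qd * (j0.re ^ 2 + j0.im ^ 2) - μ * (j1.re ^ 2 + j1.im ^ 2)
      + B' = lam.re * (r0.re ^ 2 + r0.im ^ 2) + lam.re * (j0.re ^ 2 + j0.im ^ 2)
        + lam.re * (k ^ 2 / 2) * (r1.re ^ 2 + r1.im ^ 2) := by
    rw [hB, Hhr, Hhi]
    linear_combination (-r0.re + k ^ 2 / 2 * r2.re) * E1r + (-r0.im + k ^ 2 / 2 * r2.im) * E1i
      - j0.re * E2r - j0.im * E2i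
  have e1' : (-r0.re) ^ 2 / (2 * e1) = 1 / (2 * e1) * r0.re ^ 2 := by ring
  have e2' : (-r0.im) ^ 2 / (2 * e1) = 1 / (2 * e1) * r0.im ^ 2 := by ring
  rw [e1'] at a1
  rw [e2'] at a2
  clear hB E1r E1i E2r E2i Hhr Hhi E1 E2 Hh hj1 h1M h2M h3M h4M h5M y y2 e1' e2'
  generalize 1 / (2 * e1) = X1 at *
  generalize M2 / e2 = X2 at *
  generalize M4 / e3 = X3 at *
  generalize M1 / e2 = X4 at *
  generalize M5 / e3 = X5 at *
  linarith

/-- A monotone-flux argument: nonneg derivative and vanishing at both ends. -/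
lemma aux_flux (B B' : ℝ → ℝ) (hB : ∀ x, HasDerivAt B (B' x) x) (hn : ∀ x, 0 ≤ B' x)
    (ht : Filter.Tendsto B Filter.atTop (nhds 0)) (hb : Filter.Tendsto B Filter.atBot (nhds 0)) :
    ∀ x, B' x = 0 := by
  have hm : Monotone B := monotone_of_hasDerivAt_nonneg hB hn
  have h0 : B = fun _ => 0 := by
    funext x
    exact le_antisymm (hm.ge_of_tendsto ht x) (hm.le_of_tendsto hb x)
  intro x
  have := hB x
  rw [h0] at this
  exact this.unique (hasDerivAt_const x 0)

/-- Decay of inner products. -/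
lemma aux_decay (l : Filter ℝ) (u v : ℝ → ℂ) (hu : Filter.Tendsto u l (nhds 0))
    (hv : Filter.Tendsto v l (nhds 0)) :
    Filter.Tendsto (fun x => inner ℝ (u x) (v x)) l (nhds 0) := by
  simpa using hu.inner (𝕜 := ℝ) hv

lemma aux_schwartz (f : SchwartzMap ℝ ℂ) : Filter.Tendsto f (Filter.cocompact ℝ) (nhds 0) :=
  f.toZeroAtInfty.zero_at_infty'

lemma aux_x (f : SchwartzMap ℝ ℂ) :
    Filter.Tendsto (fun x : ℝ => ((1 + |x|) * ‖f x‖)) (Filter.cocompact ℝ) (nhds 0) := by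
  obtain ⟨C, hC⟩ := f.decay 2 0
  obtain ⟨D, hD⟩ := f.decay 0 0
  have h0 := (aux_schwartz f).norm
  have h1 : Filter.Tendsto (fun x : ℝ => |x| * ‖f x‖) (Filter.cocompact ℝ) (nhds 0) := by
    have hinv : Filter.Tendsto (fun x : ℝ => C * ‖x‖⁻¹) (Filter.cocompact ℝ) (nhds 0) := by
      simpa using (tendsto_norm_cocompact_atTop (E := ℝ)).inv_tendsto_atTop.const_mul C
    refine squeeze_zero' (.of_forall fun x => by positivity) ?_ hinv
    filter_upwards [(tendsto_norm_cocompact_atTop (E := ℝ)).eventually_gt_atTop 0] with x hx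
    have := hC.2 x
    rw [norm_iteratedFDeriv_zero] at this
    rw [← div_eq_mul_inv, le_div_iff₀ hx]
    rw [Real.norm_eq_abs] at *
    nlinarith
  simpa [add_mul] using h0.add h1


/-- energy estimate bounding the real part of any eigenvalue of the
linearization of the viscous QHD system about a traveling wave profile `(P, J)` with
`J = sP − A`: if `(rho, Jt)` is a nontrivial Schwartz eigenfunction pair for the eigenvalue
`λ`, then `Re λ ≤ max(C₁, C₂, 2C₃/k²)` for every admissible choice of `ε₁, ε₂, ε₃`. -/
theorem stmt_17 (γ s μ k A : ℝ) (hγ : 1 ≤ γ) (hμ : 0 < μ) (hk : 0 < k)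
    (P J : ℝ → ℝ) (hP : ContDiff ℝ (⊤ : ℕ∞) P) (hPpos : ∀ x : ℝ, 0 < P x)
    (hJ : ∀ x : ℝ, J x = s * P x - A)
    (f₁ f₄ f₅ : ℝ → ℝ)
    (hf₁ : ∀ x : ℝ, f₁ x = (J x) ^ 2 / (P x) ^ 2 - γ * (P x) ^ (γ - 1))
    (hf₄ : ∀ x : ℝ, f₄ x =
      k ^ 2 * deriv P x * deriv (fun t => Real.sqrt (P t)) x / (P x) ^ ((3 : ℝ) / 2))
    (hf₅ : ∀ x : ℝ, f₅ x = 2 * k ^ 2 * deriv (fun t => Real.sqrt (P t)) x / Real.sqrt (P x))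
    (M₁ M₂ M₃ M₄ M₅ : ℝ)
    (hb₁ : BddAbove (Set.range fun x => (f₁ x) ^ 2))
    (hM₁ : M₁ = ⨆ x : ℝ, (f₁ x) ^ 2)
    (hb₂ : BddAbove (Set.range fun x => (deriv f₁ x) ^ 2))
    (hM₂ : M₂ = ⨆ x : ℝ, (deriv f₁ x) ^ 2)
    (hb₃ : BddAbove (Set.range fun x => |deriv (fun t => J t / P t) x|))
    (hM₃ : M₃ = ⨆ x : ℝ, |deriv (fun t => J t / P t) x|)
    (hb₄ : BddAbove (Set.range fun x => (f₄ x) ^ 2))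
    (hM₄ : M₄ = ⨆ x : ℝ, (f₄ x) ^ 2)
    (hb₅ : BddAbove (Set.range fun x => (f₅ x) ^ 2))
    (hM₅ : M₅ = ⨆ x : ℝ, (f₅ x) ^ 2)
    (lam : ℂ) (rho Jt : SchwartzMap ℝ ℂ)
    (hnz : ¬ ∀ x : ℝ, rho x = 0 ∧ Jt x = 0)
    (heq1 : ∀ x : ℝ, lam * rho x = (s : ℂ) * deriv (⇑rho) x - deriv (⇑Jt) x)
    (heq2 : ∀ x : ℝ, lam * Jt x =
      (s : ℂ) * deriv (⇑Jt) x
      + deriv (fun t => ((f₁ t : ℝ) : ℂ) * rho t) x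
      - deriv (fun t => ((2 * J t / P t : ℝ) : ℂ) * Jt t) x
      + (μ : ℂ) * deriv (deriv (⇑Jt)) x
      + ((k ^ 2 / 2 : ℝ) : ℂ) * iteratedDeriv 3 (⇑rho) x
      - ((2 * k ^ 2 : ℝ) : ℂ) *
          deriv (fun t => ((deriv (fun u => Real.sqrt (P u)) t : ℝ) : ℂ) *
            deriv (fun u => rho u / ((Real.sqrt (P u) : ℝ) : ℂ)) t) x) :
    ∀ ε₁ ε₂ ε₃ : ℝ, 0 < ε₁ → 0 < ε₂ → 0 < ε₃ → ε₁ / 2 + ε₃ / 2 < μ →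
      lam.re ≤ max (max (1 / (2 * ε₁) + M₂ / ε₂ + M₄ / ε₃) (ε₂ / 2 + M₃))
        (2 * (M₁ / ε₂ + M₅ / ε₃) / k ^ 2) := by
  intro e1 e2 e3 he1 he2 he3 hμ'
  by_contra hcon
  rw [not_le, max_lt_iff, max_lt_iff] at hcon
  obtain ⟨⟨hc1, hc2⟩, hc3⟩ := hcon
  rw [div_lt_iff₀ (by positivity)] at hc3
  have hPne : ∀ x, P x ≠ 0 := fun x => (hPpos x).ne'
  have hS : ContDiff ℝ (⊤ : ℕ∞) (fun t => Real.sqrt (P t)) := hP.sqrt hPne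
  have hSpos : ∀ x, 0 < Real.sqrt (P x) := fun x => Real.sqrt_pos.2 (hPpos x)
  have hPd : Differentiable ℝ P := hP.differentiable (by simp)
  have hSd : Differentiable ℝ (fun t => Real.sqrt (P t)) := hS.differentiable (by simp)
  have hS' : ContDiff ℝ (⊤ : ℕ∞) (deriv (fun t => Real.sqrt (P t))) :=
    (contDiff_infty_iff_deriv.1 hS).2
  have hJd : Differentiable ℝ J := by
    rw [show J = fun x => s * P x - A from funext hJ]; fun_prop
  have hqd : Differentiable ℝ (fun t => J t / P t) := fun x => (hJd x).div (hPd x) (hPne x)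
  have hf1d : Differentiable ℝ f₁ := by
    rw [show f₁ = _ from funext hf₁]
    intro x
    exact (((hJd x).pow 2).div ((hPd x).pow 2) (pow_ne_zero 2 (hPne x))).sub
      (((hPd x).rpow_const (Or.inl (hPne x))).const_mul γ)
  -- Schwartz derivatives
  set r1 : SchwartzMap ℝ ℂ := SchwartzMap.derivCLM ℝ ℂ rho with hr1
  set r2 : SchwartzMap ℝ ℂ := SchwartzMap.derivCLM ℝ ℂ r1 with hr2
  set r3 : SchwartzMap ℝ ℂ := SchwartzMap.derivCLM ℝ ℂ r2 with hr3
  set j1 : SchwartzMap ℝ ℂ := SchwartzMap.derivCLM ℝ ℂ Jt with hj1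
  set j2 : SchwartzMap ℝ ℂ := SchwartzMap.derivCLM ℝ ℂ j1 with hj2
  have dr0 : deriv (⇑rho) = r1 := rfl
  have dr1 : deriv (⇑r1) = r2 := rfl
  have dr2 : deriv (⇑r2) = r3 := rfl
  have dj0 : deriv (⇑Jt) = j1 := rfl
  have dj1 : deriv (⇑j1) = j2 := rfl
  have Hr0 : ∀ x, HasDerivAt rho (r1 x) x := fun x => rho.hasDerivAt x
  have Hr1 : ∀ x, HasDerivAt r1 (r2 x) x := fun x => r1.hasDerivAt x
  have Hr2 : ∀ x, HasDerivAt r2 (r3 x) x := fun x => r2.hasDerivAt x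
  have Hj0 : ∀ x, HasDerivAt Jt (j1 x) x := fun x => Jt.hasDerivAt x
  have Hj1 : ∀ x, HasDerivAt j1 (j2 x) x := fun x => j1.hasDerivAt x
  have dr3 : iteratedDeriv 3 (⇑rho) = r3 := by
    simp only [iteratedDeriv_succ, iteratedDeriv_zero, dr0, dr1, dr2]
  rw [dr3, dj0, dj1] at heq2
  rw [dr0, dj0] at heq1
  -- the dispersive flux
  set g : ℝ → ℂ := fun t => ((deriv (fun u => Real.sqrt (P u)) t : ℝ) : ℂ) *
            deriv (fun u => rho u / ((Real.sqrt (P u) : ℝ) : ℂ)) t with hg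
  have hSc : ContDiff ℝ (⊤ : ℕ∞) (fun t => ((Real.sqrt (P t) : ℝ) : ℂ)) :=
    Complex.ofRealCLM.contDiff.comp hS
  have hquot : ContDiff ℝ (⊤ : ℕ∞) (fun u => rho u / ((Real.sqrt (P u) : ℝ) : ℂ)) := by
    simp only [div_eq_mul_inv]
    exact (rho.smooth (⊤ : ℕ∞)).mul (hSc.inv fun x => by exact_mod_cast (hSpos x).ne')
  have hgd : Differentiable ℝ g := by
    have h1 : ContDiff ℝ (⊤ : ℕ∞) (fun t => ((deriv (fun u => Real.sqrt (P u)) t : ℝ) : ℂ)) :=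
      Complex.ofRealCLM.contDiff.comp hS'
    exact (h1.mul (contDiff_infty_iff_deriv.1 hquot).2).differentiable (by simp)
  set h : ℝ → ℂ := fun t => ((2 * k ^ 2 : ℝ) : ℂ) * g t with hh
  have Hh : ∀ x, HasDerivAt h (((2 * k ^ 2 : ℝ) : ℂ) * deriv g x) x := fun x =>
    (hgd x).hasDerivAt.const_mul _
  have hform : ∀ x, h x = f₅ x * r1 x - f₄ x * rho x := by
    intro x
    have hd : deriv (fun u => rho u / ((Real.sqrt (P u) : ℝ) : ℂ)) x
        = (r1 x * (Real.sqrt (P x) : ℝ) -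
          rho x * (deriv (fun u => Real.sqrt (P u)) x : ℝ)) / ((Real.sqrt (P x) : ℝ) : ℂ) ^ 2 :=
      ((Hr0 x).div ((hSd x).hasDerivAt.ofReal_comp)
        (by exact_mod_cast (hSpos x).ne')).deriv
    have hP' : deriv P x = 2 * Real.sqrt (P x) * deriv (fun u => Real.sqrt (P u)) x := by
      have e : P = fun u => Real.sqrt (P u) ^ 2 := by
        funext u; rw [Real.sq_sqrt (hPpos u).le]
      have := ((hSd x).hasDerivAt.pow 2).deriv
      conv_lhs => rw [e]
      exact (this.trans (by simp))
    have h32 : (P x) ^ ((3 : ℝ) / 2) = Real.sqrt (P x) ^ 3 := by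
      rw [Real.sqrt_eq_rpow, ← Real.rpow_natCast, ← Real.rpow_mul (hPpos x).le]; norm_num
    have hne : ((Real.sqrt (P x) : ℝ) : ℂ) ≠ 0 := by exact_mod_cast (hSpos x).ne'
    simp only [hh, hg]
    rw [hd, hf₄, hf₅, hP', h32]
    push_cast
    field_simp
  have bd1 : ∀ x, f₁ x ^ 2 ≤ M₁ := fun x => hM₁ ▸ le_ciSup hb₁ x
  have bd2 : ∀ x, deriv f₁ x ^ 2 ≤ M₂ := fun x => hM₂ ▸ le_ciSup hb₂ x
  have bd3 : ∀ x, |deriv (fun t => J t / P t) x| ≤ M₃ := fun x => hM₃ ▸ le_ciSup hb₃ x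
  have bd4 : ∀ x, f₄ x ^ 2 ≤ M₄ := fun x => hM₄ ▸ le_ciSup hb₄ x
  have bd5 : ∀ x, f₅ x ^ 2 ≤ M₅ := fun x => hM₅ ▸ le_ciSup hb₅ x
  set q : ℝ → ℝ := fun t => J t / P t with hq
  have hqb : ∀ x, |q x| ≤ (|q 0| + M₃) * (1 + |x|) := by
    intro x
    have := Convex.norm_image_sub_le_of_norm_deriv_le (f := q) (C := M₃) (s := Set.univ)
      (x := 0) (y := x) (fun y _ => hqd y) (fun y _ => bd3 y) convex_univ trivial trivial
    simp only [Real.norm_eq_abs, sub_zero] at this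
    have h1 := abs_sub_abs_le_abs_sub (q x) (q 0)
    have h2 : 0 ≤ M₃ := (abs_nonneg _).trans (bd3 0)
    nlinarith [abs_nonneg (q 0), abs_nonneg x, mul_nonneg (abs_nonneg (q 0)) (abs_nonneg x)]
  -- tendsto
  have T0 := aux_schwartz rho
  have T1 := aux_schwartz r1
  have T2 := aux_schwartz r2
  have TJ0 := aux_schwartz Jt
  have TJ1 := aux_schwartz j1
  have Th : Filter.Tendsto h (Filter.cocompact ℝ) (nhds 0) := by
    rw [tendsto_zero_iff_norm_tendsto_zero]
    have hlim : Filter.Tendsto (fun x => Real.sqrt M₅ * ‖r1 x‖ + Real.sqrt M₄ * ‖rho x‖)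
        (Filter.cocompact ℝ) (nhds 0) := by
      simpa using (T1.norm.const_mul (Real.sqrt M₅)).add (T0.norm.const_mul (Real.sqrt M₄))
    refine squeeze_zero (fun x => norm_nonneg _) (fun x => ?_) hlim
    rw [hform]
    refine (norm_sub_le _ _).trans ?_
    rw [norm_mul, norm_mul, Complex.norm_real, Complex.norm_real, Real.norm_eq_abs,
      Real.norm_eq_abs]
    gcongr
    · exact Real.abs_le_sqrt (bd5 x)
    · exact Real.abs_le_sqrt (bd4 x)
  have Tq : Filter.Tendsto (fun x => q x * inner ℝ (Jt x) (Jt x)) (Filter.cocompact ℝ)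
      (nhds 0) := by
    rw [tendsto_zero_iff_norm_tendsto_zero]
    have hlim : Filter.Tendsto (fun x => (|q 0| + M₃) * (((1 + |x|) * ‖Jt x‖) * ‖Jt x‖))
        (Filter.cocompact ℝ) (nhds 0) := by
      simpa using ((aux_x Jt).mul TJ0.norm).const_mul (|q 0| + M₃)
    refine squeeze_zero (fun x => norm_nonneg _) (fun x => ?_) hlim
    rw [real_inner_self_eq_norm_sq, norm_mul, Real.norm_eq_abs, Real.norm_eq_abs,
      abs_of_nonneg (sq_nonneg ‖Jt x‖)]
    have := mul_le_mul_of_nonneg_right (hqb x) (sq_nonneg ‖Jt x‖)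
    nlinarith
  have Tl0 : Filter.Tendsto (fun x => lam * rho x) (Filter.cocompact ℝ) (nhds 0) := by
    simpa using T0.const_mul lam
  let B : ℝ → ℝ := fun x => s / 2 * inner ℝ (rho x) (rho x) + s / 2 * inner ℝ (Jt x) (Jt x)
      - q x * inner ℝ (Jt x) (Jt x)
      + μ * inner ℝ (Jt x) (j1 x)
      + k ^ 2 / 2 * (inner ℝ (Jt x) (r2 x) - s / 2 * inner ℝ (r1 x) (r1 x)
        + inner ℝ (lam * rho x) (r1 x))
      - inner ℝ (Jt x) (h x)
  have TB : Filter.Tendsto B (Filter.cocompact ℝ) (nhds 0) := by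
    have := ((((((aux_decay _ _ _ T0 T0).const_mul (s / 2)).add
      ((aux_decay _ _ _ TJ0 TJ0).const_mul (s / 2))).sub Tq).add
      ((aux_decay _ _ _ TJ0 TJ1).const_mul μ)).add
      ((((aux_decay _ _ _ TJ0 T2).sub ((aux_decay _ _ _ T1 T1).const_mul (s / 2))).add
        (aux_decay _ _ _ Tl0 T1)).const_mul (k ^ 2 / 2))).sub (aux_decay _ _ _ TJ0 Th)
    simp only [mul_zero, add_zero, sub_zero] at this
    exact this
  let B' : ℝ → ℝ := fun x => s / 2 * (2 * (inner ℝ (rho x) (r1 x)))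
      + s / 2 * (2 * inner ℝ (Jt x) (j1 x))
      - (deriv q x * inner ℝ (Jt x) (Jt x) + q x * (2 * inner ℝ (Jt x) (j1 x)))
      + μ * (inner ℝ (Jt x) (j2 x) + inner ℝ (j1 x) (j1 x))
      + k ^ 2 / 2 * ((inner ℝ (Jt x) (r3 x) + inner ℝ (j1 x) (r2 x))
        - s / 2 * (2 * inner ℝ (r1 x) (r2 x))
        + (inner ℝ (lam * rho x) (r2 x) + inner ℝ (lam * r1 x) (r1 x)))
      - (inner ℝ (Jt x) (((2 * k ^ 2 : ℝ) : ℂ) * deriv g x) + inner ℝ (j1 x) (h x))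
  have HB : ∀ x, HasDerivAt B (B' x) x := by
    intro x
    have := (((((((Hr0 x).inner ℝ (Hr0 x)).const_mul (s / 2)).add
      (((Hj0 x).inner ℝ (Hj0 x)).const_mul (s / 2))).sub
      ((hqd x).hasDerivAt.mul ((Hj0 x).inner ℝ (Hj0 x)))).add
      (((Hj0 x).inner ℝ (Hj1 x)).const_mul μ)).add
      (((((Hj0 x).inner ℝ (Hr2 x)).sub (((Hr1 x).inner ℝ (Hr1 x)).const_mul (s / 2))).add
        (((Hr0 x).const_mul lam).inner ℝ (Hr1 x))).const_mul (k ^ 2 / 2))).sub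
      ((Hj0 x).inner ℝ (Hh x))
    refine this.congr_deriv ?_
    simp only [B', hq]
    rw [real_inner_comm (Jt x) (j1 x), real_inner_comm (rho x) (r1 x),
      real_inner_comm (r1 x) (r2 x)]
    ring
  have key : ∀ x, (lam.re - (1 / (2 * e1) + M₂ / e2 + M₄ / e3)) * inner ℝ (rho x) (rho x)
      + (lam.re - (e2 / 2 + M₃)) * inner ℝ (Jt x) (Jt x)
      + (lam.re * (k ^ 2 / 2) - (M₁ / e2 + M₅ / e3)) * inner ℝ (r1 x) (r1 x) ≤ B' x := by
    intro x
    refine aux_point s μ k e1 e2 e3 M₁ M₂ M₃ M₄ M₅ (f₁ x) (deriv f₁ x) (q x) (deriv q x)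
      (f₄ x) (f₅ x) lam (rho x) (r1 x) (r2 x) (r3 x) (Jt x) (j1 x) (j2 x) (h x)
      (((2 * k ^ 2 : ℝ) : ℂ) * deriv g x) he1 he2 he3 hμ' (bd1 x) (bd2 x) (bd3 x) (bd4 x)
      (bd5 x) (heq1 x) ?_ (hform x) (B' x) rfl
    have d1 : deriv (fun t => ((f₁ t : ℝ) : ℂ) * rho t) x
        = deriv f₁ x * rho x + f₁ x * r1 x :=
      ((hf1d x).hasDerivAt.ofReal_comp.mul (Hr0 x)).deriv
    have d2 : deriv (fun t => ((2 * J t / P t : ℝ) : ℂ) * Jt t) x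
        = (2 * deriv q x : ℝ) * Jt x + (2 * q x : ℝ) * j1 x := by
      have e : (fun t => ((2 * J t / P t : ℝ) : ℂ) * Jt t)
          = fun t => ((2 * q t : ℝ) : ℂ) * Jt t := by
        funext t; simp only [hq, mul_div_assoc]
      rw [e]
      exact (((hqd x).hasDerivAt.const_mul 2).ofReal_comp.mul (Hj0 x)).deriv
    rw [heq2 x, d1, d2]
  have p1 : 0 < lam.re - (1 / (2 * e1) + M₂ / e2 + M₄ / e3) := by linarith
  have p2 : 0 < lam.re - (e2 / 2 + M₃) := by linarith
  have p3 : 0 < lam.re * (k ^ 2 / 2) - (M₁ / e2 + M₅ / e3) := by linarith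
  have n1 : ∀ z : ℂ, 0 ≤ inner ℝ z z := fun z => real_inner_self_nonneg
  have hn : ∀ x, 0 ≤ B' x := fun x => le_trans (add_nonneg (add_nonneg
    (mul_nonneg p1.le (n1 _)) (mul_nonneg p2.le (n1 _))) (mul_nonneg p3.le (n1 _))) (key x)
  have hz := aux_flux B B' HB hn (TB.mono_left atTop_le_cocompact)
    (TB.mono_left atBot_le_cocompact)
  apply hnz
  intro x
  have hk' := key x
  rw [hz x] at hk'
  have m1 := mul_nonneg p1.le (n1 (rho x))
  have m2 := mul_nonneg p2.le (n1 (Jt x))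
  have m3 := mul_nonneg p3.le (n1 (r1 x))
  constructor
  · have : (lam.re - (1 / (2 * e1) + M₂ / e2 + M₄ / e3)) * inner ℝ (rho x) (rho x) = 0 := by
      linarith
    exact inner_self_eq_zero.1 ((mul_eq_zero.1 this).resolve_left p1.ne')
  · have : (lam.re - (e2 / 2 + M₃)) * inner ℝ (Jt x) (Jt x) = 0 := by
      linarith
    exact inner_self_eq_zero.1 ((mul_eq_zero.1 this).resolve_left p2.ne')
end
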